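/- arXiv:1909.07967 — 6 statements merged into one kernel-verified Lean document; each statement's English description precedes it below -/
import Mathlib

section
/- There exists a positive integer p₀ such that for every prime p ≥ p₀ and every subset A ⊆ 𝔽_p \ {0} with |A| ≥ 0.313·p, every element of 𝔽_p \ {−1, 0, 1} belongs to the set (A+A)/A = {(a₁ + a₂)·a₃⁻¹ : a₁, a₂, a₃ ∈ A}. -/
/-!
Suppose that `x` is not represented, that is, `a₁ + a₂ ≠ x a₃` for all `aᵢ ∈ A`; we may shrink `A`
to density about `0.313`. Then `A + A` avoids the dilate `x A`, so `|A + A| + |A| ≤ p`.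

Counting solutions of `a₁ + a₂ = x a₃` by characters shows that `A` has a large nontrivial Fourier
coefficient (`exists_large_coeff`). By Lev's sharp inequality between character sums and the
distribution on half arcs (`re_sum_le`), some dilate of `A` has at least `0.2298 p` elements in an
arc of length less than `p / 2` (`exists_dense_arc`). Choosing the dilate and the arc to contain
as many elements as possible, and then the arc as short as possible, and translating, one obtains
a set `S` of integers in `[0, p)` whose part in the arc is a set of coprime integers in `[0, L]`
containing `0` and `L` (`Good`, `exists_good`).

Sums of elements of the arc are not reduced modulo `p`, so the Lev–Smeliansky theorem
(`lev_smeliansky`), which follows from Kneser's theorem (`kneser`), applies to them. Together with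
`|S + S| + |S| ≤ p` it implies that all of `S` is contained in `[0, L]` (`Good.le_L`), and then
that `L ≤ p - 2 |S|`, so that `S` misses at most about `0.061 p` elements of the interval `[0,
L]`.

By the pigeonhole principle `S + S` contains a long interval. Since `x S` avoids a translate of `S
+ S`, it lies in an interval of length `J < p / 2` (`Good.dilate_subset`). Again by pigeonhole,
`S` contains three term progressions with each difference `k ≤ p / 11`, and therefore `x k` has
absolute least residue below `J / 2`; by induction on `k` this residue is `y k`, where `y` is that
of `x`, so `|y| ≤ 2`. A pair of elements of `S` at distance about `p / 4` excludes `|y| = 2`, and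
the remaining values give `x ∈ {-1, 0, 1}` (`Good.false_of_ne`). -/

namespace SumRatio

open Finset
open scoped Pointwise

/-! ### Kneser's theorem -/

/-- The underlying finset of a subgroup of a finite group. -/
noncomputable def elts {G : Type*} [AddCommGroup G] [Fintype G] (H : AddSubgroup G) : Finset G := by
  classical exact Finset.univ.filter (· ∈ H)

lemma mem_elts {G : Type*} [AddCommGroup G] [Fintype G] {H : AddSubgroup G} {g : G} :
    g ∈ elts H ↔ g ∈ H := by
  simp [elts]

/-- `C` is a union of cosets of `H`. -/
def Per {G : Type*} [AddCommGroup G] (C : Finset G) (H : AddSubgroup G) : Prop :=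
  ∀ c ∈ C, ∀ h ∈ H, c + h ∈ C

lemma Per.not_mem {G : Type*} [AddCommGroup G] {C : Finset G} {H : AddSubgroup G}
    (hC : Per C H) {c h : G} (hc : c ∉ C) (hh : h ∈ H) : c + h ∉ C := by
  intro h1
  apply hc
  have := hC _ h1 (-h) (H.neg_mem hh)
  simpa using this

/-- If `z + k + l ∈ E` for all `k ∈ S ⊆ H₁` and `l ∈ T ⊆ H₂`, then `|S| |T| ≤ |E| |H₁ ⊓ H₂|`,
because each sum `k + l` has at most `|H₁ ⊓ H₂|` representations. -/
lemma grid_card {G : Type*} [AddCommGroup G] [Fintype G] [DecidableEq G]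
    {H₁ H₂ : AddSubgroup G} (z : G) (S T E : Finset G)
    (hS : ∀ k ∈ S, k ∈ H₁) (hT : ∀ l ∈ T, l ∈ H₂)
    (hE : ∀ k ∈ S, ∀ l ∈ T, z + k + l ∈ E) :
    #S * #T ≤ #E * #(elts (H₁ ⊓ H₂)) := by
  rw [← card_product, mul_comm]
  refine card_le_mul_card_image_of_maps_to (f := fun q : G × G => z + q.1 + q.2) (t := E) ?_ _ ?_
  · rintro ⟨k, l⟩ h
    rw [mem_product] at h
    exact hE k h.1 l h.2
  · intro e _
    by_cases hne : ((S ×ˢ T).filter (fun q : G × G => z + q.1 + q.2 = e)).Nonempty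
    · obtain ⟨⟨k₀, l₀⟩, h₀⟩ := hne
      simp only [mem_filter, mem_product] at h₀
      refine card_le_card_of_injOn (fun q => q.1 - k₀) ?_ ?_
      · rintro ⟨k, l⟩ h
        simp only [coe_filter, mem_product, Set.mem_ofPred_eq] at h
        have h1 : k - k₀ = l₀ - l := by
          have h2 := h.2.trans h₀.2.symm
          have h3 : k + l = k₀ + l₀ := by
            rw [add_assoc, add_assoc] at h2
            exact add_left_cancel h2
          rw [sub_eq_sub_iff_add_eq_add, h3, add_comm]
        rw [mem_coe, mem_elts]
        refine ⟨H₁.sub_mem (hS _ h.1.1) (hS _ h₀.1.1), ?_⟩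
        show k - k₀ ∈ H₂
        rw [h1]
        exact H₂.sub_mem (hT _ h₀.1.2) (hT _ h.1.2)
      · rintro ⟨k, l⟩ h ⟨k', l'⟩ h' hkk
        simp only [coe_filter, mem_product, Set.mem_ofPred_eq] at h h'
        have hk : k = k' := by simpa using hkk
        subst hk
        have h2 := h.2.trans h'.2.symm
        have := add_left_cancel h2
        rw [this]
    · rw [not_nonempty_iff_eq_empty] at hne
      rw [hne]; simp

lemma card_elts_pos {G : Type*} [AddCommGroup G] [Fintype G] (H : AddSubgroup G) :
    1 ≤ #(elts H) := card_pos.mpr ⟨0, mem_elts.mpr H.zero_mem⟩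

lemma coset_card_le {G : Type*} [AddCommGroup G] [Fintype G] [DecidableEq G]
    {H : AddSubgroup G} {E : Finset G} (z : G) (h : ∀ k ∈ H, z + k ∈ E) : #(elts H) ≤ #E :=
  card_le_card_of_injOn (fun k => z + k) (fun k hk => h k (mem_elts.mp hk))
    (fun a _ b _ hab => by simpa using hab)

/-- The main case of `union_per`: if both differences of the periodic sets `C₁` and `C₂` are small,
then no coset of `H₂` inside `C₂` meets `C₁` without being contained in it. The contradiction comes
from counting, on the coset of `H₁ + H₂` through `z`, the parts of `C₂ \ C₁` and `C₁ \ C₂` that have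
a product structure. -/
lemma grid_false {G : Type*} [AddCommGroup G] [Fintype G] [DecidableEq G]
    {C₁ C₂ : Finset G} {H₁ H₂ : AddSubgroup G} (h₁ : Per C₁ H₁) (h₂ : Per C₂ H₂)
    (hlt₁ : #(C₂ \ C₁) + #(elts (H₁ ⊓ H₂)) < #(elts H₁))
    (hlt₂ : #(C₁ \ C₂) + #(elts (H₁ ⊓ H₂)) < #(elts H₂)) {z l₀ : G} (hz₂ : z ∈ C₂)
    (hz₁ : z ∉ C₁) (hl₀ : l₀ ∈ H₂) (hzl : z + l₀ ∈ C₁) : False := by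
  have hk : ∃ k ∈ H₁, z + k ∉ C₂ := by
    by_contra hk
    push Not at hk
    have := coset_card_le (E := C₂ \ C₁) z
      (fun k hk' => mem_sdiff.mpr ⟨hk k hk', h₁.not_mem hz₁ hk'⟩)
    omega
  obtain ⟨k₀, hk₀, hzk⟩ := hk
  set S := (elts H₁).filter (fun k => z + k ∈ C₂) with hS
  set S' := (elts H₁).filter (fun k => ¬ (z + k ∈ C₂)) with hS'
  set T := (elts H₂).filter (fun l => ¬ (z + l ∈ C₁)) with hT
  set T' := (elts H₂).filter (fun l => z + l ∈ C₁) with hT'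
  have cS : #S + #S' = #(elts H₁) := card_filter_add_card_filter_not _
  have cT : #T' + #T = #(elts H₂) := card_filter_add_card_filter_not _
  have g₁ := grid_card (H₁ := H₁) (H₂ := H₂) z S T (C₂ \ C₁)
    (fun k hk => mem_elts.mp (mem_filter.mp hk).1) (fun l hl => mem_elts.mp (mem_filter.mp hl).1)
    (by
      intro k hk l hl
      have hk' := mem_filter.mp hk
      have hl' := mem_filter.mp hl
      refine mem_sdiff.mpr ⟨h₂ _ hk'.2 _ (mem_elts.mp hl'.1), ?_⟩
      have := h₁.not_mem hl'.2 (mem_elts.mp hk'.1)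
      rwa [add_right_comm] at this)
  have g₂ := grid_card (H₁ := H₁) (H₂ := H₂) z S' T' (C₁ \ C₂)
    (fun k hk => mem_elts.mp (mem_filter.mp hk).1) (fun l hl => mem_elts.mp (mem_filter.mp hl).1)
    (by
      intro k hk l hl
      have hk' := mem_filter.mp hk
      have hl' := mem_filter.mp hl
      refine mem_sdiff.mpr ⟨?_, h₂.not_mem hk'.2 (mem_elts.mp hl'.1)⟩
      have := h₁ _ hl'.2 _ (mem_elts.mp hk'.1)
      rwa [add_right_comm] at this)
  have b₁ : #(elts (H₁ ⊓ H₂)) ≤ #S := by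
    refine card_le_card fun g hg => ?_
    have hg' := mem_elts.mp hg
    exact mem_filter.mpr ⟨mem_elts.mpr hg'.1, h₂ _ hz₂ _ hg'.2⟩
  have b₂ : #(elts (H₁ ⊓ H₂)) ≤ #T := by
    refine card_le_card fun g hg => ?_
    have hg' := mem_elts.mp hg
    exact mem_filter.mpr ⟨mem_elts.mpr hg'.2, h₁.not_mem hz₁ hg'.1⟩
  have b₃ : #(elts (H₁ ⊓ H₂)) ≤ #S' := by
    refine card_le_card_of_injOn (fun g => k₀ + g) (fun g hg => ?_)
      (fun a _ b _ hab => by simpa using hab)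
    have hg' := mem_elts.mp hg
    refine mem_filter.mpr ⟨mem_elts.mpr (H₁.add_mem hk₀ hg'.1), ?_⟩
    rw [← add_assoc]
    exact h₂.not_mem hzk hg'.2
  have b₄ : #(elts (H₁ ⊓ H₂)) ≤ #T' := by
    refine card_le_card_of_injOn (fun g => l₀ + g) (fun g hg => ?_)
      (fun a _ b _ hab => by simpa using hab)
    have hg' := mem_elts.mp hg
    refine mem_filter.mpr ⟨mem_elts.mpr (H₂.add_mem hl₀ hg'.2), ?_⟩
    rw [← add_assoc]
    exact h₁ _ hzl _ hg'.1
  have hη := card_elts_pos (H₁ ⊓ H₂)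
  generalize #(elts (H₁ ⊓ H₂)) = η at *
  generalize #S = s at *
  generalize #S' = s' at *
  generalize #T = t at *
  generalize #T' = t' at *
  generalize #(C₂ \ C₁) = u at *
  generalize #(C₁ \ C₂) = v at *
  zify at *
  -- `s (t - η) < η (s' - η)` and `t' (s' - η) < η (t - η)` are incompatible with `s, t' ≥ η`
  have e₁ : (s : ℤ) * (t - η) < η * (s' - η) := by nlinarith
  have e₂ : (t' : ℤ) * (s' - η) < η * (t - η) := by nlinarith
  have e₃ : (η : ℤ) * (t - η) ≤ s * (t - η) := by
    apply mul_le_mul_of_nonneg_right <;> linarith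
  have e₄ : (η : ℤ) * (s' - η) ≤ t' * (s' - η) := by
    apply mul_le_mul_of_nonneg_right <;> linarith
  linarith

/-- The sets satisfying the Kneser type bound `m ≤ |C| + |H|`, with `C` a union of cosets of `H`,
are closed under unions. -/
lemma union_per {G : Type*} [AddCommGroup G] [Fintype G] [DecidableEq G]
    {C₁ C₂ : Finset G} {H₁ H₂ : AddSubgroup G} (h₁ : Per C₁ H₁) (h₂ : Per C₂ H₂) {m : ℕ}
    (hm₁ : m ≤ #C₁ + #(elts H₁)) (hm₂ : m ≤ #C₂ + #(elts H₂)) :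
    ∃ H, Per (C₁ ∪ C₂) H ∧ m ≤ #(C₁ ∪ C₂) + #(elts H) := by
  by_cases hs₁ : C₂ ⊆ C₁
  · rw [union_eq_left.mpr hs₁]; exact ⟨H₁, h₁, hm₁⟩
  by_cases hs₂ : C₁ ⊆ C₂
  · rw [union_eq_right.mpr hs₂]; exact ⟨H₂, h₂, hm₂⟩
  refine ⟨H₁ ⊓ H₂, ?_, ?_⟩
  · intro c hc h hh
    rcases mem_union.mp hc with hc | hc
    · exact mem_union_left _ (h₁ c hc h hh.1)
    · exact mem_union_right _ (h₂ c hc h hh.2)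
  have hu₁ : #(C₁ ∪ C₂) = #C₁ + #(C₂ \ C₁) := by
    rw [← card_union_of_disjoint disjoint_sdiff, union_sdiff_self_eq_union]
  have hu₂ : #(C₁ ∪ C₂) = #C₂ + #(C₁ \ C₂) := by
    rw [← card_union_of_disjoint disjoint_sdiff, union_sdiff_self_eq_union, union_comm]
  by_contra hcon
  rw [not_le] at hcon
  have hlt₁ : #(C₂ \ C₁) + #(elts (H₁ ⊓ H₂)) < #(elts H₁) := by omega
  have hlt₂ : #(C₁ \ C₂) + #(elts (H₁ ⊓ H₂)) < #(elts H₂) := by omega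
  obtain ⟨z, hz₂, hz₁⟩ := not_subset.mp hs₁
  obtain ⟨y, hy₁, hy₂⟩ := not_subset.mp hs₂
  by_cases hgrid : ∃ l ∈ H₂, z + l ∈ C₁
  · obtain ⟨l₀, hl₀, hzl⟩ := hgrid
    exact grid_false h₁ h₂ hlt₁ hlt₂ hz₂ hz₁ hl₀ hzl
  by_cases hgrid' : ∃ k ∈ H₁, y + k ∈ C₂
  · obtain ⟨k₀, hk₀, hyk⟩ := hgrid'
    rw [inf_comm] at hlt₁ hlt₂
    exact grid_false h₂ h₁ hlt₂ hlt₁ hy₁ hy₂ hk₀ hyk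
  push Not at hgrid hgrid'
  have c₁ := coset_card_le (E := C₂ \ C₁) (H := H₂) z
    (fun l hl => mem_sdiff.mpr ⟨h₂ _ hz₂ _ hl, hgrid l hl⟩)
  have c₂ := coset_card_le (E := C₁ \ C₂) (H := H₁) y
    (fun l hl => mem_sdiff.mpr ⟨h₁ _ hy₁ _ hl, hgrid' l hl⟩)
  omega

/-- The stabilizer of a finite set under translation. -/
def stab {G : Type*} [AddCommGroup G] (C : Finset G) : AddSubgroup G where
  carrier := {g | ∀ c ∈ C, c + g ∈ C ∧ c - g ∈ C}
  zero_mem' := by intro c hc; simp [hc]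
  add_mem' := by
    intro a b ha hb c hc
    refine ⟨?_, ?_⟩
    · rw [← add_assoc]; exact (hb _ (ha c hc).1).1
    · rw [← sub_sub]; exact (hb _ (ha c hc).2).2
  neg_mem' := by
    intro a ha c hc
    refine ⟨?_, ?_⟩
    · rw [← sub_eq_add_neg]; exact (ha c hc).2
    · rw [sub_neg_eq_add]; exact (ha c hc).1

lemma per_stab {G : Type*} [AddCommGroup G] (C : Finset G) : Per C (stab C) :=
  fun c hc _ hg => (hg c hc).1

lemma Per.le_stab {G : Type*} [AddCommGroup G] {C : Finset G} {H : AddSubgroup G}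
    (h : Per C H) : H ≤ stab C := by
  intro g hg c hc
  refine ⟨h c hc g hg, ?_⟩
  rw [sub_eq_add_neg]
  exact h c hc _ (H.neg_mem hg)

lemma mem_stab {G : Type*} [AddCommGroup G] [DecidableEq G] {C : Finset G} {g : G}
    (h : ∀ c ∈ C, c + g ∈ C) : g ∈ stab C := by
  intro c hc
  refine ⟨h c hc, ?_⟩
  -- an injective self-map of a finite set is onto
  have hi : C.image (· + g) = C :=
    eq_of_subset_of_card_le (image_subset_iff.mpr h)
      (by rw [card_image_of_injective _ (add_left_injective g)])
  rw [← hi] at hc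
  obtain ⟨d, hd, rfl⟩ := mem_image.mp hc
  simpa using hd

lemma elts_mono {G : Type*} [AddCommGroup G] [Fintype G] {H K : AddSubgroup G} (h : H ≤ K) :
    #(elts H) ≤ #(elts K) :=
  card_le_card fun _ hg => mem_elts.mpr (h (mem_elts.mp hg))

/-- The local form of Kneser's theorem: every element of `A + B` lies in a periodic subset of
`A + B` which is large relative to its period. -/
lemma kneser_local {G : Type*} [AddCommGroup G] [Fintype G] [DecidableEq G] (n : ℕ) :
    ∀ A B : Finset G, #B = n → ∀ a₀ ∈ A, ∀ b₀ ∈ B,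
      ∃ C ⊆ A + B, a₀ + b₀ ∈ C ∧ ∃ H, Per C H ∧ #A + #B ≤ #C + #(elts H) := by
  induction n using Nat.strong_induction_on with
  | _ n ih =>
    intro A B hB a₀ ha₀ b₀ hb₀
    by_cases hall : ∀ a ∈ A, ∀ b ∈ B, a + (b - b₀) ∈ A
    · refine ⟨A.image (· + b₀), ?_, mem_image_of_mem _ ha₀, stab A, ?_, ?_⟩
      · intro c hc
        obtain ⟨a, ha, rfl⟩ := mem_image.mp hc
        exact add_mem_add ha hb₀
      · intro c hc h hh
        obtain ⟨a, ha, rfl⟩ := mem_image.mp hc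
        exact mem_image.mpr ⟨a + h, (hh a ha).1, by abel⟩
      · rw [card_image_of_injective _ (add_left_injective b₀)]
        refine Nat.add_le_add_left ?_ _
        refine card_le_card_of_injOn (fun b => b - b₀) (fun b hb => ?_)
          (fun a _ b _ hab => by simpa using hab)
        exact mem_elts.mpr (mem_stab fun a ha => hall a ha b hb)
    · push Not at hall
      obtain ⟨a, ha, b, hb, hab⟩ := hall
      -- the Dyson transform with `e = a - b₀` strictly shrinks `B` and keeps `a₀ + b₀`
      set D := B.image (· + (a - b₀)) with hD
      have hDc : #D = #B := card_image_of_injective _ (add_left_injective _)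
      set B' := (A ∩ D).image (· - (a - b₀)) with hB'
      have hBc : #B' = #(A ∩ D) := card_image_of_injective _ (sub_left_injective)
      have hsub : #(A ∩ D) < #D := by
        refine card_lt_card ⟨inter_subset_right, fun hss => hab ?_⟩
        have : b + (a - b₀) ∈ A ∩ D := hss (mem_image_of_mem _ hb)
        have := (mem_inter.mp this).1
        convert this using 1
        abel
      have hui := card_union_add_card_inter A D
      obtain ⟨C, hC, hmem, H, hH, hcard⟩ := ih #B' (by omega) (A ∪ D) B' rfl a₀
        (mem_union_left _ ha₀) b₀ (by
          refine mem_image.mpr ⟨a, mem_inter.mpr ⟨ha, ?_⟩, by abel⟩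
          exact mem_image.mpr ⟨b₀, hb₀, by abel⟩)
      refine ⟨C, hC.trans ?_, hmem, H, hH, by omega⟩
      intro c hc
      obtain ⟨u, hu, v, hv, rfl⟩ := mem_add.mp hc
      obtain ⟨w, hw, rfl⟩ := mem_image.mp hv
      rw [mem_inter] at hw
      obtain ⟨b', hb', rfl⟩ := mem_image.mp hw.2
      rcases mem_union.mp hu with hu | hu
      · exact mem_add.mpr ⟨u, hu, b', hb', by abel⟩
      · obtain ⟨b'', hb'', rfl⟩ := mem_image.mp hu
        exact mem_add.mpr ⟨_, hw.1, b'', hb'', by abel⟩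

/-- Gluing the sets of `kneser_local` by `union_per` shows that `A + B` itself satisfies the
bound for some period `H`. -/
lemma kneser_weak {G : Type*} [AddCommGroup G] [Fintype G] [DecidableEq G] {A B : Finset G}
    (hA : A.Nonempty) (hB : B.Nonempty) :
    ∃ H, Per (A + B) H ∧ #A + #B ≤ #(A + B) + #(elts H) := by
  have key : ∀ s : Finset G, s ⊆ A + B → s.Nonempty →
      ∃ C ⊆ A + B, s ⊆ C ∧ ∃ H, Per C H ∧ #A + #B ≤ #C + #(elts H) := by
    intro s
    induction s using Finset.induction_on with
    | empty => intro _ h; exact absurd h (by simp)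
    | insert x s _ ih =>
      intro hs _
      obtain ⟨a, ha, b, hb, rfl⟩ := mem_add.mp (hs (mem_insert_self _ _))
      obtain ⟨C₁, hC₁, hm, H₁, hH₁, hc₁⟩ := kneser_local _ A B rfl a ha b hb
      rcases s.eq_empty_or_nonempty with rfl | hne
      · exact ⟨C₁, hC₁, by simpa using hm, H₁, hH₁, hc₁⟩
      · obtain ⟨C₂, hC₂, hm₂, H₂, hH₂, hc₂⟩ :=
          ih ((subset_insert _ _).trans hs) hne
        obtain ⟨H, hH, hc⟩ := union_per hH₁ hH₂ hc₁ hc₂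
        refine ⟨C₁ ∪ C₂, union_subset hC₁ hC₂, ?_, H, hH, hc⟩
        exact insert_subset (mem_union_left _ hm) (hm₂.trans subset_union_right)
  obtain ⟨C, hC, hs, H, hH, hc⟩ := key (A + B) Subset.rfl (hA.add hB)
  obtain rfl := Subset.antisymm hC hs
  exact ⟨H, hH, hc⟩

lemma subset_add_elts {G : Type*} [AddCommGroup G] [Fintype G] [DecidableEq G] (A : Finset G)
    (H : AddSubgroup G) : A ⊆ A + elts H :=
  fun a ha => mem_add.mpr ⟨a, ha, 0, mem_elts.mpr H.zero_mem, add_zero a⟩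

/-- Kneser's theorem: `|A + B| ≥ |A + H| + |B + H| - |H|`, where `H` is the stabilizer of `A + B`.
-/
theorem kneser {G : Type*} [AddCommGroup G] [Fintype G] [DecidableEq G] {A B : Finset G}
    (hA : A.Nonempty) (hB : B.Nonempty) :
    #(A + elts (stab (A + B))) + #(B + elts (stab (A + B)))
      ≤ #(A + B) + #(elts (stab (A + B))) := by
  set H := stab (A + B) with hH
  have heq : (A + elts H) + (B + elts H) = A + B := by
    refine Subset.antisymm ?_ (add_subset_add (subset_add_elts _ _) (subset_add_elts _ _))
    intro c hc
    obtain ⟨u, hu, v, hv, rfl⟩ := mem_add.mp hc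
    obtain ⟨a, ha, h, hh, rfl⟩ := mem_add.mp hu
    obtain ⟨b, hb, k, hk, rfl⟩ := mem_add.mp hv
    have := per_stab (A + B) _ (add_mem_add ha hb) (h + k)
      (H.add_mem (mem_elts.mp hh) (mem_elts.mp hk))
    convert this using 1
    abel
  obtain ⟨K, hK, hc⟩ := kneser_weak (hA.mono (subset_add_elts A H)) (hB.mono (subset_add_elts B H))
  rw [heq] at hK hc
  have := elts_mono hK.le_stab
  rw [← hH] at this
  omega

/-! ### The Lev–Smeliansky theorem -/

/-- At most `|A + H| - |A|` elements of a coset `x + H` with `x ∈ A` lie outside `A`. -/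
lemma coset_inter_card {G : Type*} [AddCommGroup G] [Fintype G] [DecidableEq G] (A : Finset G)
    (H : AddSubgroup G) [DecidablePred (· ∈ H)] {x : G} (hx : x ∈ A) :
    #A + #(elts H) ≤ #(A + elts H) + #(A.filter (fun a => a - x ∈ H)) := by
  set E := (elts H).image (x + ·) with hE
  have hEc : #E = #(elts H) := card_image_of_injective _ (add_right_injective x)
  have h1 : A ∪ E ⊆ A + elts H := by
    refine union_subset (subset_add_elts A H) fun e he => ?_
    obtain ⟨h, hh, rfl⟩ := mem_image.mp he
    exact add_mem_add hx hh
  have h2 : A ∩ E ⊆ A.filter (fun a => a - x ∈ H) := by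
    intro a ha
    rw [mem_inter] at ha
    obtain ⟨h, hh, rfl⟩ := mem_image.mp ha.2
    refine mem_filter.mpr ⟨ha.1, ?_⟩
    simpa using mem_elts.mp hh
  have := card_union_add_card_inter A E
  have := card_le_card h1
  have := card_le_card h2
  omega

/-- Integers without a common divisor generate `ℤ/ℓℤ`. -/
lemma eq_top_of_gcd {ℓ : ℕ} {X : Finset ℕ} (hg : ∀ g : ℕ, (∀ x ∈ X, g ∣ x) → g = 1)
    {H : AddSubgroup (ZMod ℓ)} (hX : ∀ x ∈ X, (x : ZMod ℓ) ∈ H) : H = ⊤ := by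
  obtain ⟨d, hd⟩ := Int.subgroup_cyclic (H.comap (Int.castAddHom (ZMod ℓ)))
  have h1 : d.natAbs = 1 := by
    refine hg _ fun x hx => ?_
    have : (x : ℤ) ∈ H.comap (Int.castAddHom (ZMod ℓ)) := by
      simpa using hX x hx
    rw [hd, AddSubgroup.mem_closure_singleton] at this
    obtain ⟨n, hn⟩ := this
    rw [← Int.natCast_dvd_natCast, Int.natAbs_dvd]
    exact ⟨n, by rw [← hn, smul_eq_mul, mul_comm]⟩
  rw [eq_top_iff]
  intro g _
  obtain ⟨n, rfl⟩ := ZMod.intCast_surjective g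
  have : n ∈ H.comap (Int.castAddHom (ZMod ℓ)) := by
    rw [hd, AddSubgroup.mem_closure_singleton]
    rcases Int.natAbs_eq d with h | h <;> rw [h1] at h
    · exact ⟨n, by simp [h]⟩
    · exact ⟨-n, by simp [h]⟩
  simpa using this

/-- The Lev–Smeliansky theorem: if `X, Y ⊆ [0, ℓ]` contain `0`, and `X` contains `ℓ` and has coprime
elements, then `|X + Y| ≥ min (ℓ + |Y|, |X| + 2 |Y| - 3)`. Modulo `ℓ` the sumset is bounded below by
Kneser's theorem, and the elements of `ℓ + Y` are never least representatives of their classes, so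
they contribute `|Y|` further elements. -/
theorem lev_smeliansky {X Y : Finset ℕ} {ℓ : ℕ} (hℓ : 1 ≤ ℓ) (hX0 : 0 ∈ X) (hXℓ : ℓ ∈ X)
    (hX : ∀ x ∈ X, x ≤ ℓ) (hY0 : 0 ∈ Y) (hY : ∀ y ∈ Y, y ≤ ℓ)
    (hg : ∀ g : ℕ, (∀ x ∈ X, g ∣ x) → g = 1) :
    ℓ + #Y ≤ #(X + Y) ∨ #X + 2 * #Y ≤ #(X + Y) + 3 := by
  classical
  have : NeZero ℓ := ⟨by omega⟩
  set π : ℕ → ZMod ℓ := fun n => (n : ZMod ℓ) with hπ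
  have hπadd : ∀ a b, π (a + b) = π a + π b := fun a b => by simp [hπ]
  have hπℓ : π ℓ = 0 := by simp [hπ]
  have hπ0 : π 0 = 0 := by simp [hπ]
  have hinj : ∀ a b, a < ℓ → b < ℓ → π a = π b → a = b := by
    intro a b ha hb hab
    have := (ZMod.natCast_eq_natCast_iff' a b ℓ).mp hab
    rwa [Nat.mod_eq_of_lt ha, Nat.mod_eq_of_lt hb] at this
  set X₀ := X.erase ℓ with hX₀
  set Y₀ := Y.erase ℓ with hY₀
  have hX₀lt : ∀ x ∈ X₀, x < ℓ := fun x hx =>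
    lt_of_le_of_ne (hX x (mem_of_mem_erase hx)) (ne_of_mem_erase hx)
  have hY₀lt : ∀ x ∈ Y₀, x < ℓ := fun x hx =>
    lt_of_le_of_ne (hY x (mem_of_mem_erase hx)) (ne_of_mem_erase hx)
  have hX₀c : #X₀ + 1 = #X := card_erase_add_one hXℓ
  have hY₀c : #Y ≤ #Y₀ + 1 := by
    have := pred_card_le_card_erase (s := Y) (a := ℓ); rw [← hY₀] at this; omega
  have hX₀0 : 0 ∈ X₀ := mem_erase.mpr ⟨by omega, hX0⟩
  have hY₀0 : 0 ∈ Y₀ := mem_erase.mpr ⟨by omega, hY0⟩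
  set Xb := X₀.image π with hXb
  set Yb := Y₀.image π with hYb
  have hXbc : #Xb = #X₀ := card_image_of_injOn fun a ha b hb h =>
    hinj a b (hX₀lt a ha) (hX₀lt b hb) h
  have hYbc : #Yb = #Y₀ := card_image_of_injOn fun a ha b hb h =>
    hinj a b (hY₀lt a ha) (hY₀lt b hb) h
  have hXmem : ∀ x ∈ X, π x ∈ Xb := by
    intro x hx
    by_cases h : x = ℓ
    · rw [h, hπℓ, ← hπ0]; exact mem_image_of_mem _ hX₀0
    · exact mem_image_of_mem _ (mem_erase.mpr ⟨h, hx⟩)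
  have hYmem : ∀ x ∈ Y, π x ∈ Yb := by
    intro x hx
    by_cases h : x = ℓ
    · rw [h, hπℓ, ← hπ0]; exact mem_image_of_mem _ hY₀0
    · exact mem_image_of_mem _ (mem_erase.mpr ⟨h, hx⟩)
  have hX0b : (0 : ZMod ℓ) ∈ Xb := by rw [← hπ0]; exact mem_image_of_mem _ hX₀0
  have hY0b : (0 : ZMod ℓ) ∈ Yb := by rw [← hπ0]; exact mem_image_of_mem _ hY₀0
  set S := X + Y with hS
  set T := Y.image (ℓ + ·) with hT
  have hTc : #T = #Y := card_image_of_injective _ (add_right_injective ℓ)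
  have hTS : T ⊆ S := image_subset_iff.mpr fun y hy => add_mem_add hXℓ hy
  set W := S \ T with hW
  have hWc : #W + #Y = #S := by rw [hW, ← hTc, card_sdiff_add_card_eq_card hTS]
  set C := Xb + Yb with hC
  -- the least representative in `X + Y` of a residue class does not lie in `ℓ + Y`
  have hCW : ∀ c ∈ C, ∃ w ∈ W, π w = c := by
    intro c hc
    have hex : ∃ n, n ∈ S ∧ π n = c := by
      obtain ⟨a, ha, b, hb, rfl⟩ := mem_add.mp hc
      obtain ⟨x, hx, rfl⟩ := mem_image.mp ha
      obtain ⟨y, hy, rfl⟩ := mem_image.mp hb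
      exact ⟨x + y, add_mem_add (mem_of_mem_erase hx) (mem_of_mem_erase hy), hπadd _ _⟩
    refine ⟨Nat.find hex, mem_sdiff.mpr ⟨(Nat.find_spec hex).1, fun hmem => ?_⟩,
      (Nat.find_spec hex).2⟩
    obtain ⟨y, hy, hy'⟩ := mem_image.mp hmem
    have h1 : y ∈ S ∧ π y = c := by
      refine ⟨by simpa using add_mem_add hX0 hy, ?_⟩
      have := (Nat.find_spec hex).2
      rw [← hy', hπadd, hπℓ, zero_add] at this
      exact this
    have := Nat.find_min' hex h1
    replace hy' : ℓ + y = Nat.find hex := hy'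
    omega
  set H := stab C with hH
  have hkn : #(Xb + elts H) + #(Yb + elts H) ≤ #C + #(elts H) :=
    kneser ⟨0, hX0b⟩ ⟨0, hY0b⟩
  have h0C : (0 : ZMod ℓ) ∈ C := mem_add.mpr ⟨0, hX0b, 0, hY0b, add_zero 0⟩
  by_cases htop : H = ⊤
  · left
    have hCu : C = univ := by
      refine eq_univ_of_forall fun c => ?_
      have := per_stab C 0 h0C c (by rw [← hH, htop]; trivial)
      simpa using this
    have : #C ≤ #W :=
      (card_le_card fun c hc => mem_image.mpr (hCW c hc)).trans (card_image_le (f := π))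
    rw [hCu, card_univ, ZMod.card] at this
    omega
  · right
    -- some coset of `H` in `X + Y` avoids `Y + H`, hence gives no elements of `ℓ + Y`
    have hex : ∃ x ∈ X₀, ∃ y ∈ Y₀, π x + π y ∉ Yb + elts H := by
      by_contra hcon
      push Not at hcon
      apply htop
      refine eq_top_of_gcd hg fun x hx => mem_stab fun c hc => ?_
      have hcY : c ∈ Yb + elts H := by
        obtain ⟨a, ha, b, hb, rfl⟩ := mem_add.mp hc
        obtain ⟨x, hx, rfl⟩ := mem_image.mp ha
        obtain ⟨y, hy, rfl⟩ := mem_image.mp hb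
        exact hcon x hx y hy
      obtain ⟨y, hy, h, hh, rfl⟩ := mem_add.mp hcY
      have := per_stab C _ (add_mem_add (hXmem x hx) hy) h (mem_elts.mp hh)
      convert this using 1
      simp only [hπ]
      abel
    obtain ⟨x, hx, y, hy, hxy⟩ := hex
    set P := X₀.filter (fun a => π a - π x ∈ H) with hP
    set Q := Y₀.filter (fun a => π a - π y ∈ H) with hQ
    have hPc : #(Xb.filter (fun a => a - π x ∈ H)) ≤ #P := by
      rw [hXb, filter_image]
      exact card_image_le
    have hQc : #(Yb.filter (fun a => a - π y ∈ H)) ≤ #Q := by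
      rw [hYb, filter_image]
      exact card_image_le
    have c1 := coset_inter_card Xb H (mem_image_of_mem π hx)
    have c2 := coset_inter_card Yb H (mem_image_of_mem π hy)
    have hPQ : #P + #Q - 1 ≤ #(P + Q) :=
      cauchy_davenport_add_of_linearOrder_isCancelAdd
        ⟨x, mem_filter.mpr ⟨hx, by simp [H.zero_mem]⟩⟩
        ⟨y, mem_filter.mpr ⟨hy, by simp [H.zero_mem]⟩⟩
    set F := W.filter (fun w => π w - (π x + π y) ∈ H) with hF
    set F' := W.filter (fun w => ¬ (π w - (π x + π y) ∈ H)) with hF'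
    have hFF : #F + #F' = #W := card_filter_add_card_filter_not _
    have hPQF : P + Q ⊆ F := by
      intro s hs
      obtain ⟨a, ha, b, hb, rfl⟩ := mem_add.mp hs
      have ha' := mem_filter.mp ha
      have hb' := mem_filter.mp hb
      have hmem : π (a + b) - (π x + π y) ∈ H := by
        have := H.add_mem ha'.2 hb'.2
        rw [hπadd]
        convert this using 1
        abel
      refine mem_filter.mpr ⟨mem_sdiff.mpr ⟨add_mem_add (mem_of_mem_erase ha'.1)
        (mem_of_mem_erase hb'.1), fun hmT => hxy ?_⟩, hmem⟩
      obtain ⟨v, hv, hv'⟩ := mem_image.mp hmT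
      replace hv' : ℓ + v = a + b := hv'
      refine mem_add.mpr ⟨π v, hYmem v hv, -(π (a + b) - (π x + π y)),
        mem_elts.mpr (H.neg_mem hmem), ?_⟩
      rw [← hv', hπadd, hπℓ]
      abel
    have hCF : #C ≤ #F' + #(elts H) := by
      have hsub : C ⊆ F'.image π ∪ (elts H).image (π x + π y + ·) := by
        intro c hc
        obtain ⟨w, hw, rfl⟩ := hCW c hc
        by_cases h : π w - (π x + π y) ∈ H
        · exact mem_union_right _ (mem_image.mpr ⟨_, mem_elts.mpr h, by abel⟩)
        · exact mem_union_left _ (mem_image_of_mem _ (mem_filter.mpr ⟨hw, h⟩))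
      have := card_le_card hsub
      have := card_union_le (F'.image π) ((elts H).image (π x + π y + ·))
      have := card_image_le (s := F') (f := π)
      have := card_image_le (s := elts H) (f := (π x + π y + ·))
      omega
    have := card_le_card hPQF
    omega

/-! ### A large Fourier coefficient -/

open scoped ComplexConjugate in
/-- A set avoiding the equation `a₁ + a₂ = x a₃` has a large nontrivial Fourier coefficient: expand
the number of solutions in characters and apply Parseval's identity. -/
lemma exists_large_coeff {p : ℕ} [Fact p.Prime] {A : Finset (ZMod p)} {x : ZMod p} (hx : x ≠ 0)
    (hne : A.Nonempty) (hA : ∀ a ∈ A, ∀ b ∈ A, ∀ c ∈ A, a + b ≠ x * c) :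
    ∃ d : ZMod p, d ≠ 0 ∧
      (#A : ℝ) ^ 2 ≤ (p - #A) * ‖∑ a ∈ A, ZMod.stdAddChar (d * a)‖ := by
  set e : AddChar (ZMod p) ℂ := ZMod.stdAddChar with he
  have hprim : e.IsPrimitive := ZMod.isPrimitive_stdAddChar p
  set F : ZMod p → ℂ := fun d => ∑ a ∈ A, e (d * a) with hF
  have hF0 : F 0 = #A := by simp [hF]
  have hpars : ∑ d, ‖F d‖ ^ 2 = (p : ℝ) * #A := by
    have h1 : ∀ d, ((‖F d‖ ^ 2 : ℝ) : ℂ) = ∑ a ∈ A, ∑ b ∈ A, e (d * (a - b)) := by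
      intro d
      rw [← Complex.normSq_eq_norm_sq, Complex.normSq_eq_conj_mul_self, mul_comm]
      simp only [hF]
      rw [map_sum, sum_mul_sum]
      refine sum_congr rfl fun a _ => sum_congr rfl fun b _ => ?_
      rw [← AddChar.map_neg_eq_conj, ← AddChar.map_add_eq_mul]
      congr 1
      ring
    have h2 : ((∑ d, ‖F d‖ ^ 2 : ℝ) : ℂ) = ((p : ℝ) * #A : ℝ) := by
      rw [Complex.ofReal_sum]
      simp_rw [h1]
      rw [sum_comm]
      have h3 : ∀ a ∈ A, ∑ d, ∑ b ∈ A, e (d * (a - b)) = p := by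
        intro a ha
        rw [sum_comm]
        simp_rw [AddChar.sum_mulShift _ hprim, sub_eq_zero]
        simp [Nat.cast_ite, ha, ZMod.card]
      rw [sum_congr rfl h3]
      simp [mul_comm]
    exact_mod_cast h2
  have hsol : ∑ d, F d * F d * F (-(x * d)) = 0 := by
    have h1 : ∀ d, F d * F d * F (-(x * d)) =
        ∑ a ∈ A, ∑ b ∈ A, ∑ c ∈ A, e (d * (a + b - x * c)) := by
      intro d
      simp only [hF]
      rw [sum_mul_sum, sum_mul]
      refine sum_congr rfl fun a _ => ?_
      rw [sum_mul]
      refine sum_congr rfl fun b _ => ?_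
      rw [mul_sum]
      refine sum_congr rfl fun c _ => ?_
      rw [← AddChar.map_add_eq_mul, ← AddChar.map_add_eq_mul]
      congr 1
      ring
    simp_rw [h1]
    rw [sum_comm]
    refine sum_eq_zero fun a ha => ?_
    rw [sum_comm]
    refine sum_eq_zero fun b hb => ?_
    rw [sum_comm]
    refine sum_eq_zero fun c hc => ?_
    rw [AddChar.sum_mulShift _ hprim, if_neg]
    · simp
    · rw [sub_eq_zero]; exact hA a ha b hb c hc
  have hN : (0 : ℝ) < #A := by exact_mod_cast hne.card_pos
  obtain ⟨d₀, hd₀, hmax⟩ := exists_max_image (univ.erase (0 : ZMod p)) (fun d => ‖F d‖)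
    ⟨1, by simp⟩
  refine ⟨d₀, ne_of_mem_erase hd₀, ?_⟩
  have h1 : F 0 * F 0 * F (-(x * 0)) =
      - ∑ d ∈ univ.erase (0 : ZMod p), F d * F d * F (-(x * d)) := by
    rw [eq_neg_iff_add_eq_zero,
      add_sum_erase _ (fun d => F d * F d * F (-(x * d))) (mem_univ (0 : ZMod p))]
    exact hsol
  have h2 : (#A : ℝ) ^ 3 ≤ ∑ d ∈ univ.erase (0 : ZMod p), ‖F d‖ ^ 2 * ‖F d₀‖ := by
    have h3 : ‖F 0 * F 0 * F (-(x * 0))‖ = (#A : ℝ) ^ 3 := by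
      rw [mul_zero, neg_zero, norm_mul, norm_mul, hF0, Complex.norm_natCast]
      ring
    rw [← h3, h1, norm_neg]
    refine (norm_sum_le _ _).trans (sum_le_sum fun d hd => ?_)
    rw [norm_mul, norm_mul, sq]
    refine mul_le_mul_of_nonneg_left (hmax _ ?_) (by positivity)
    exact mem_erase.mpr ⟨neg_ne_zero.mpr (mul_ne_zero hx (ne_of_mem_erase hd)), mem_univ _⟩
  rw [← sum_mul] at h2
  have h4 : ∑ d ∈ univ.erase (0 : ZMod p), ‖F d‖ ^ 2 = (p : ℝ) * #A - (#A : ℝ) ^ 2 := by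
    rw [← hpars, ← add_sum_erase _ _ (mem_univ (0 : ZMod p)), hF0, Complex.norm_natCast]
    ring
  rw [h4] at h2
  have h5 : (#A : ℝ) * (#A : ℝ) ^ 2 ≤ #A * ((p - #A) * ‖F d₀‖) := by nlinarith
  exact le_of_mul_le_mul_left h5 hN

/-! ### Character sums and half arcs -/

lemma val_add_cases {p : ℕ} [NeZero p] (a b : ZMod p) :
    (a + b).val = a.val + b.val ∧ a.val + b.val < p ∨
      (a + b).val + p = a.val + b.val ∧ p ≤ a.val + b.val := by
  rcases lt_or_ge (a.val + b.val) p with h | h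
  · exact Or.inl ⟨ZMod.val_add_of_lt h, h⟩
  · exact Or.inr ⟨(ZMod.val_add_val_of_le h).symm, h⟩

lemma val_sub_cases {p : ℕ} [NeZero p] (a b : ZMod p) :
    b.val ≤ a.val ∧ (a - b).val + b.val = a.val ∨
      a.val < b.val ∧ (a - b).val + b.val = a.val + p := by
  have h := val_add_cases (a - b) b
  have h1 := ZMod.val_lt (a - b)
  rw [sub_add_cancel] at h
  omega

lemma val_add_nat_cases {p : ℕ} [NeZero p] (a : ZMod p) {k : ℕ} (hk : k < p) :
    (a + (k : ZMod p)).val = a.val + k ∧ a.val + k < p ∨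
      (a + (k : ZMod p)).val + p = a.val + k ∧ p ≤ a.val + k := by
  have := val_add_cases a (k : ZMod p)
  rwa [ZMod.val_cast_of_lt hk] at this

open Real in
lemma re_stdAddChar {p : ℕ} [NeZero p] (b : ZMod p) :
    (ZMod.stdAddChar b).re = cos (2 * π * b.val / p) := by
  have h : b = ((b.val : ℤ) : ZMod p) := by simp
  conv_lhs => rw [h, ZMod.stdAddChar_coe]
  have : (2 * π * Complex.I * ((b.val : ℤ) : ℂ) / p : ℂ)
      = ((2 * π * b.val / p : ℝ) : ℂ) * Complex.I := by
    push_cast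
    ring
  rw [this, Complex.exp_ofReal_mul_I_re]

/-- Multiplying by a suitable additive character rotates a sum close to the positive real axis. -/
lemma exists_rotation {p : ℕ} [NeZero p] (z : ℂ) :
    ∃ k : ZMod p, ‖z‖ * (1 - 2 * Real.pi / p) ≤ (ZMod.stdAddChar k * z).re := by
  have hp : (0 : ℝ) < p := by exact_mod_cast NeZero.pos p
  have hπ := Real.pi_pos
  set θ := z.arg with hθ
  set n : ℤ := ⌊θ * p / (2 * Real.pi)⌋ with hn
  set δ : ℝ := θ - 2 * Real.pi * n / p with hδ
  have h1 : (n : ℝ) ≤ θ * p / (2 * Real.pi) := Int.floor_le _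
  have h2 : θ * p / (2 * Real.pi) < n + 1 := Int.lt_floor_add_one _
  rw [le_div_iff₀ (by positivity)] at h1
  rw [div_lt_iff₀ (by positivity)] at h2
  have hδ0 : 0 ≤ δ := by
    rw [hδ, sub_nonneg, div_le_iff₀ hp]; linarith
  have hδ1 : δ ≤ 2 * Real.pi / p := by
    rw [hδ, sub_le_iff_le_add, ← add_div, le_div_iff₀ hp]; linarith
  refine ⟨((-n : ℤ) : ZMod p), ?_⟩
  have h3 : ZMod.stdAddChar ((-n : ℤ) : ZMod p) * z = ‖z‖ * Complex.exp (δ * Complex.I) := by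
    conv_lhs => rw [← Complex.norm_mul_exp_arg_mul_I z, ZMod.stdAddChar_coe]
    rw [mul_left_comm, ← Complex.exp_add]
    congr 2
    rw [hδ, ← hθ]
    push_cast
    ring
  rw [h3, Complex.re_ofReal_mul, Complex.exp_ofReal_mul_I_re]
  refine mul_le_mul_of_nonneg_left ?_ (norm_nonneg _)
  -- `cos` is `1`-Lipschitz
  have h4 : |Real.cos 0 - Real.cos δ| ≤ |0 - δ| := by
    have := Real.lipschitzWith_cos.dist_le_mul 0 δ
    simpa [Real.dist_eq] using this
  rw [Real.cos_zero, zero_sub, abs_neg, abs_of_nonneg hδ0] at h4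
  have := (abs_le.mp h4).2
  linarith

lemma telescope (a : ℕ → ℝ) (n J : ℕ) (h : n ≤ J) :
    ∑ j ∈ range J, (a j - a (j + 1)) * (if n ≤ j then 1 else 0) = a n - a J := by
  induction J, h using Nat.le_induction with
  | base =>
    rw [sub_self]
    refine sum_eq_zero fun j hj => ?_
    rw [if_neg (by simpa using hj), mul_zero]
  | succ J hJ ih => rw [sum_range_succ, ih, if_pos hJ]; ring

/-- The number of residues of `B` near `0` exceeds the number of residues near `p / 2` by at most
what the bound for the half arcs allows. -/
lemma near_sub_far {p h : ℕ} [NeZero p] (hp : p = 2 * h + 1) {B : Finset (ZMod p)} {ν K j : ℕ}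
    (hν : ∀ k : ℕ, #(B.filter fun b => 2 * (b + (k : ZMod p)).val < p) ≤ ν)
    (hK : 2 * ν ≤ #B + 2 * K + 1) (hj : 4 * j ≤ p) :
    #(B.filter fun b => b.val ≤ j ∨ p ≤ b.val + j) ≤
      #(B.filter fun b => h < b.val + j ∧ b.val < h + 1 + j) + (1 + 2 * min K j) := by
  have h1 : #(B.filter fun b => b.val ≤ j ∨ p ≤ b.val + j) ≤ 1 + 2 * j := by
    have hsub : (B.filter fun b => b.val ≤ j ∨ p ≤ b.val + j) ⊆
        (Icc (-j : ℤ) j).image (fun n : ℤ => (n : ZMod p)) := by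
      intro b hb
      rw [mem_filter] at hb
      have hlt := ZMod.val_lt b
      rw [mem_image]
      rcases hb.2 with hb | hb
      · exact ⟨b.val, by rw [mem_Icc]; omega, by simp⟩
      · exact ⟨b.val - p, by rw [mem_Icc]; omega, by simp⟩
    refine (card_le_card hsub).trans (card_image_le.trans ?_)
    rw [Int.card_Icc]
    omega
  have h2 : #(B.filter fun b => 2 * (b + (j : ZMod p)).val < p) +
      #(B.filter fun b => 2 * (b + ((h - j : ℕ) : ZMod p)).val < p) +
      #(B.filter fun b => h < b.val + j ∧ b.val < h + 1 + j) =
      #(B.filter fun b => b.val ≤ j ∨ p ≤ b.val + j) + #B := by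
    simp only [card_filter]
    rw [card_eq_sum_ones, ← sum_add_distrib, ← sum_add_distrib, ← sum_add_distrib]
    refine sum_congr rfl fun b _ => ?_
    have hlt := ZMod.val_lt b
    have c1 := val_add_nat_cases b (show j < p by omega)
    have c2 := val_add_nat_cases b (show h - j < p by omega)
    split_ifs <;> omega
  have := hν j
  have := hν (h - j)
  omega

open Real in
/-- Lev's bound for the real part of a character sum over a set which is not concentrated on any
half arc. The cosine is a superposition of indicator functions of short arcs around `0`, minus
those of the opposite arcs, so `near_sub_far` bounds the sum by the one over `[-K, K]`, up to a
constant. -/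
lemma re_sum_le {p h : ℕ} [NeZero p] (hp : p = 2 * h + 1) {B : Finset (ZMod p)} {ν K : ℕ}
    (hν : ∀ k : ℕ, #(B.filter fun b => 2 * (b + (k : ZMod p)).val < p) ≤ ν)
    (hK : 2 * ν ≤ #B + 2 * K + 1) (hKp : 4 * K ≤ p) :
    ∑ b ∈ B, (ZMod.stdAddChar b).re ≤ 6 + 2 * ∑ i ∈ Icc 1 K, cos (2 * π * i / p) := by
  have hp0 : (0 : ℝ) < p := by exact_mod_cast NeZero.pos p
  have hpr : (p : ℝ) = 2 * h + 1 := by rw [hp]; push_cast; ring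
  have hπ := pi_pos
  set a : ℕ → ℝ := fun n => cos (2 * π * n / p) with ha
  set J := p / 4 with hJ
  have hJ4 : 4 * J ≤ p := by omega
  have hJ4r : 4 * (J : ℝ) ≤ p := by exact_mod_cast hJ4
  have hJ4r' : (p : ℝ) ≤ 4 * J + 3 := by
    have : p ≤ 4 * J + 3 := by omega
    exact_mod_cast this
  -- `a` is antitone on `[0, h]`
  have hanti : ∀ m n : ℕ, m ≤ n → 2 * n ≤ p → a n ≤ a m := by
    intro m n hmn hn
    have hmn' : (m : ℝ) ≤ n := by exact_mod_cast hmn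
    have hn' : 2 * (n : ℝ) ≤ p := by exact_mod_cast hn
    apply cos_le_cos_of_nonneg_of_le_pi
    · positivity
    · rw [div_le_iff₀ hp0]; nlinarith
    · gcongr
  have hc : ∀ j ∈ range J, 0 ≤ a j - a (j + 1) := by
    intro j hj
    rw [mem_range] at hj
    exact sub_nonneg.mpr (hanti _ _ (by omega) (by omega))
  have haJ0 : 0 ≤ a J := by
    apply cos_nonneg_of_neg_pi_div_two_le_of_le
    · have : 0 ≤ 2 * π * J / p := by positivity
      linarith
    · rw [div_le_iff₀ hp0]; nlinarith
  have haJ : a J ≤ 5 / p := by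
    have h1 : a J = sin (π / 2 - 2 * π * J / p) := by rw [sin_pi_div_two_sub]
    have h2 : 0 ≤ π / 2 - 2 * π * J / p := by
      rw [sub_nonneg, div_le_iff₀ hp0]; nlinarith
    have h3 : π / 2 - 2 * π * J / p ≤ 5 / p := by
      rw [sub_le_iff_le_add, ← add_div, le_div_iff₀ hp0]
      nlinarith [pi_lt_d2]
    rw [h1]
    exact (sin_le h2).trans h3
  have ha1 : ∀ n, a n ≤ 1 := fun n => cos_le_one _
  -- the cosine as a superposition of differences of indicator functions
  have hpt : ∀ b ∈ B, (ZMod.stdAddChar b).re ≤ 5 / p + ∑ j ∈ range J, (a j - a (j + 1)) *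
      ((if b.val ≤ j ∨ p ≤ b.val + j then 1 else 0) -
        (if h < b.val + j ∧ b.val < h + 1 + j then 1 else 0)) := by
    intro b _
    rw [re_stdAddChar]
    have hlt := ZMod.val_lt b
    generalize b.val = v at *
    -- `n` is the distance from `v` to the nearest multiple of `p`
    obtain ⟨n, hn, hnv, hav⟩ : ∃ n, 2 * n < p ∧ (n = v ∨ n + v = p) ∧
        cos (2 * π * v / p) = a n := by
      by_cases hv : 2 * v < p
      · exact ⟨v, hv, Or.inl rfl, rfl⟩
      · refine ⟨p - v, by omega, Or.inr (by omega), ?_⟩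
        simp only [ha]
        rw [Nat.cast_sub hlt.le, show 2 * π * ((p : ℝ) - v) / p = 2 * π - 2 * π * v / p by
          field_simp, cos_two_pi_sub]
    rw [hav]
    by_cases hnJ : n ≤ J
    · have hs : ∑ j ∈ range J, (a j - a (j + 1)) *
          ((if v ≤ j ∨ p ≤ v + j then 1 else 0) -
            (if h < v + j ∧ v < h + 1 + j then 1 else 0)) =
          ∑ j ∈ range J, (a j - a (j + 1)) * (if n ≤ j then 1 else 0) := by
        refine sum_congr rfl fun j hj => ?_
        rw [mem_range] at hj
        congr 1
        rw [if_neg (by omega : ¬ (h < v + j ∧ v < h + 1 + j)), sub_zero]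
        exact if_congr (by omega) rfl rfl
      rw [hs, telescope a n J hnJ]
      linarith
    · have hs : ∑ j ∈ range J, (a j - a (j + 1)) *
          ((if v ≤ j ∨ p ≤ v + j then 1 else 0) -
            (if h < v + j ∧ v < h + 1 + j then 1 else 0)) =
          - ∑ j ∈ range J, (a j - a (j + 1)) * (if h - n + 1 ≤ j then 1 else 0) := by
        rw [← sum_neg_distrib]
        refine sum_congr rfl fun j hj => ?_
        rw [mem_range] at hj
        rw [← mul_neg]
        congr 1
        rw [if_neg (by omega : ¬ (v ≤ j ∨ p ≤ v + j)), zero_sub]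
        congr 1
        exact if_congr (by omega) rfl rfl
      have hneg : a n ≤ - a (h - n + 1) := by
        have e1 : a n = - cos (2 * π * (h - n + 1 / 2) / p) := by
          rw [← cos_pi_sub]
          simp only [ha]
          congr 1
          rw [hpr]
          have : (2 * (h : ℝ) + 1) ≠ 0 := by positivity
          field_simp
          ring
        have hnh : (n : ℝ) ≤ h := by
          have : n ≤ h := by omega
          exact_mod_cast this
        rw [e1, neg_le_neg_iff]
        have hcast : ((h - n + 1 : ℕ) : ℝ) = h - n + 1 := by
          rw [Nat.cast_add, Nat.cast_sub (by omega)]; simp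
        simp only [ha]
        rw [hcast]
        apply cos_le_cos_of_nonneg_of_le_pi
        · apply div_nonneg _ hp0.le
          apply mul_nonneg <;> linarith
        · have hnJ' : 4 * (n : ℝ) ≥ p := by
            have : p ≤ 4 * n := by omega
            exact_mod_cast this
          have hh1 : (1 : ℝ) ≤ n := by
            have : 1 ≤ n := by omega
            exact_mod_cast this
          rw [div_le_iff₀ hp0]
          nlinarith
        · gcongr
          linarith
      have h5 : 0 ≤ 5 / (p : ℝ) := by positivity
      rw [hs]
      by_cases hle : h - n + 1 ≤ J
      · rw [telescope a _ J hle]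
        linarith
      · have h0 : ∑ j ∈ range J, (a j - a (j + 1)) *
            (if h - n + 1 ≤ j then (1 : ℝ) else 0) = 0 := by
          refine sum_eq_zero fun j hj => ?_
          rw [mem_range] at hj
          rw [if_neg (by omega), mul_zero]
        rw [h0]
        have hn0 : a n ≤ 0 := by
          apply cos_nonpos_of_pi_div_two_le_of_le
          · have hnJ' : 4 * (n : ℝ) ≥ p := by
              have : p ≤ 4 * n := by omega
              exact_mod_cast this
            rw [le_div_iff₀ hp0]; nlinarith
          · have hn' : 2 * (n : ℝ) ≤ p := by exact_mod_cast hn.le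
            have : 2 * π * n / p ≤ π := by rw [div_le_iff₀ hp0]; nlinarith
            linarith
        linarith
  have hBp : (#B : ℝ) ≤ p := by
    have := card_le_univ B
    rw [ZMod.card] at this
    exact_mod_cast this
  calc ∑ b ∈ B, (ZMod.stdAddChar b).re
      ≤ ∑ b ∈ B, (5 / p + ∑ j ∈ range J, (a j - a (j + 1)) *
      ((if b.val ≤ j ∨ p ≤ b.val + j then 1 else 0) -
        (if h < b.val + j ∧ b.val < h + 1 + j then 1 else 0))) := sum_le_sum hpt
    _ = #B * (5 / p) + ∑ j ∈ range J, (a j - a (j + 1)) *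
      ((#(B.filter fun b => b.val ≤ j ∨ p ≤ b.val + j) : ℝ) -
        #(B.filter fun b => h < b.val + j ∧ b.val < h + 1 + j)) := by
        rw [sum_add_distrib, sum_const, nsmul_eq_mul, sum_comm]
        congr 1
        refine sum_congr rfl fun j _ => ?_
        rw [← mul_sum, sum_sub_distrib]
        simp only [card_filter]
        push_cast
        rfl
    _ ≤ 5 + ∑ j ∈ range J, (a j - a (j + 1)) * (1 + 2 * ∑ i ∈ Icc 1 K, if i ≤ j then 1 else 0) := by
        refine add_le_add ?_ (sum_le_sum fun j hj => ?_)
        · rw [mul_div_assoc', div_le_iff₀ hp0]; linarith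
        · refine mul_le_mul_of_nonneg_left ?_ (hc j hj)
          rw [mem_range] at hj
          have h1 := near_sub_far hp hν hK (show 4 * j ≤ p by omega)
          have h2 : (∑ i ∈ Icc 1 K, if i ≤ j then (1 : ℝ) else 0) = (min K j : ℕ) := by
            rw [sum_boole]
            congr 1
            have : (Icc 1 K).filter (fun i => i ≤ j) = Icc 1 (min K j) := by
              ext i; simp only [mem_filter, mem_Icc]; omega
            rw [this, Nat.card_Icc]; omega
          rw [h2]
          have h3 : (#(B.filter fun b => b.val ≤ j ∨ p ≤ b.val + j) : ℝ) ≤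
            #(B.filter fun b => h < b.val + j ∧ b.val < h + 1 + j) + (1 + 2 * (min K j : ℕ)) := by
            exact_mod_cast h1
          linarith
    _ = 5 + ((a 0 - a J) + 2 * ∑ i ∈ Icc 1 K, (a i - a J)) := by
        congr 1
        simp_rw [mul_add, mul_one, sum_add_distrib]
        congr 1
        · exact sum_range_sub' a J
        · rw [mul_sum]
          simp_rw [mul_left_comm _ (2 : ℝ), mul_sum]
          rw [sum_comm]
          refine sum_congr rfl fun i hi => ?_
          rw [mem_Icc] at hi
          rw [← telescope a i J (by omega), mul_sum]
    _ ≤ 6 + 2 * ∑ i ∈ Icc 1 K, a i := by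
        have : ∑ i ∈ Icc 1 K, (a i - a J) ≤ ∑ i ∈ Icc 1 K, a i :=
          sum_le_sum fun i _ => by linarith
        linarith [ha1 0]

lemma sum_sq_ge (K : ℕ) : (K : ℝ) ^ 3 / 3 ≤ ∑ i ∈ Icc 1 K, (i : ℝ) ^ 2 := by
  induction K with
  | zero => simp
  | succ K ih =>
    rw [sum_Icc_succ_top (by omega)]
    push_cast
    have : (0 : ℝ) ≤ K := Nat.cast_nonneg K
    nlinarith

open Real in
/-- A cubic saving over the trivial bound `K`, from `cos u ≤ 1 - u ^ 2 / 2 + O(u ^ 4)`. -/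
lemma sum_cos_le {p K : ℕ} (hp : 0 < p) (hK : 1000 * K ≤ 74 * p) :
    ∑ i ∈ Icc 1 K, cos (2 * π * i / p) ≤ K - 19 / 3 * K ^ 3 / p ^ 2 := by
  have hp0 : (0 : ℝ) < p := by exact_mod_cast hp
  have hKr : 1000 * (K : ℝ) ≤ 74 * p := by exact_mod_cast hK
  have hπ1 := pi_gt_d2
  have hπ2 := pi_lt_d2
  have h : ∀ i ∈ Icc 1 K, cos (2 * π * i / p) ≤ 1 - 19 / p ^ 2 * (i : ℝ) ^ 2 := by
    intro i hi
    rw [mem_Icc] at hi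
    have hiK : (i : ℝ) ≤ K := by exact_mod_cast hi.2
    set t : ℝ := i / p with ht
    have ht0 : 0 ≤ t := by positivity
    have ht1 : t ≤ 0.074 := by rw [ht, div_le_iff₀ hp0]; linarith
    have hu : 2 * π * i / p = 2 * π * t := by rw [ht]; ring
    have hv : 19 / (p : ℝ) ^ 2 * (i : ℝ) ^ 2 = 19 * t ^ 2 := by rw [ht]; ring
    rw [hu, hv]
    set u := 2 * π * t with hut
    have hu0 : 0 ≤ u := by positivity
    have hu1 : u ≤ 0.47 := by nlinarith
    have hcos := (abs_le.mp (cos_bound (x := u) (by rw [abs_of_nonneg hu0]; linarith))).2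
    rw [abs_of_nonneg hu0] at hcos
    have hu2 : u ^ 2 ≤ 0.2209 := by nlinarith
    have hu4 : u ^ 4 ≤ 0.2209 * u ^ 2 := by nlinarith [sq_nonneg u]
    have hut2 : 39.4 * t ^ 2 ≤ u ^ 2 := by
      have : u ^ 2 = 4 * π ^ 2 * t ^ 2 := by rw [hut]; ring
      rw [this]
      have : 39.4 ≤ 4 * π ^ 2 := by nlinarith
      nlinarith [sq_nonneg t]
    nlinarith [sq_nonneg t]
  refine (sum_le_sum h).trans ?_
  rw [sum_sub_distrib, ← mul_sum]
  have h1 := sum_sq_ge K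
  have h2 : (∑ i ∈ Icc 1 K, (1 : ℝ)) = K := by simp
  have h3 : 19 / (p : ℝ) ^ 2 * ((K : ℝ) ^ 3 / 3) ≤ 19 / p ^ 2 * ∑ i ∈ Icc 1 K, (i : ℝ) ^ 2 :=
    mul_le_mul_of_nonneg_left h1 (by positivity)
  have h4 : 19 / (p : ℝ) ^ 2 * ((K : ℝ) ^ 3 / 3) = 19 / 3 * K ^ 3 / p ^ 2 := by ring
  rw [h2]
  linarith

/-- Some dilate of a set avoiding `a₁ + a₂ = x a₃` is concentrated on a half arc. Otherwise
`re_sum_le` contradicts the large Fourier coefficient of `exists_large_coeff`; the constants are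
`0.313 ^ 2 / 0.687 > 0.1426` against `2 * 0.0733 - (38 / 3) * 0.0733 ^ 3 < 0.1417`. -/
lemma exists_dense_arc {p : ℕ} [Fact p.Prime] (hp : 1000000 ≤ p) {A : Finset (ZMod p)}
    {x : ZMod p} (hx : x ≠ 0) (hN : 313 * p ≤ 1000 * #A)
    (hA : ∀ a ∈ A, ∀ b ∈ A, ∀ c ∈ A, a + b ≠ x * c) :
    ∃ d : ZMod p, d ≠ 0 ∧ ∃ c : ZMod p,
      2298 * p ≤ 10000 * #(A.filter fun a => 2 * (d * a - c).val < p) := by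
  have hne : A.Nonempty := card_pos.mp (by omega)
  obtain ⟨d, hd, hcoef⟩ := exists_large_coeff hx hne hA
  refine ⟨d, hd, ?_⟩
  by_contra hcon
  push Not at hcon
  obtain ⟨k, hk⟩ := exists_rotation (p := p) (∑ a ∈ A, ZMod.stdAddChar (d * a))
  have hinj : Function.Injective fun a : ZMod p => k + d * a := fun a b hab => by
    simpa [hd] using hab
  set B := A.image fun a => k + d * a with hB
  have hBc : #B = #A := card_image_of_injective _ hinj
  have hν : ∀ j : ℕ, #(B.filter fun b => 2 * (b + (j : ZMod p)).val < p) ≤ 2298 * p / 10000 := by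
    intro j
    rw [hB, filter_image, card_image_of_injective _ hinj]
    have h1 := hcon (-(k + j))
    have h2 : (A.filter fun a => 2 * (d * a - -(k + (j : ZMod p))).val < p) =
        A.filter fun a => 2 * (k + d * a + (j : ZMod p)).val < p := by
      refine filter_congr fun a _ => ?_
      rw [show d * a - -(k + (j : ZMod p)) = k + d * a + j by ring]
    rw [h2] at h1
    omega
  obtain ⟨h, hh⟩ : ∃ h, p = 2 * h + 1 :=
    (Fact.out : p.Prime).odd_of_ne_two (by omega)
  set K := 733 * p / 10000 + 1 with hK
  have hre := re_sum_le hh hν (K := K) (by omega) (by omega)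
  have hcos := sum_cos_le (p := p) (K := K) (by omega) (by omega)
  rw [hB, sum_image (fun a _ b _ hab => hinj hab), ← Complex.re_sum] at hre
  simp_rw [AddChar.map_add_eq_mul] at hre
  rw [← mul_sum] at hre
  set Z := ‖∑ a ∈ A, ZMod.stdAddChar (d * a)‖ with hZ
  have hAp : #A ≤ p := by simpa [ZMod.card] using card_le_univ A
  have hZp : Z ≤ p := by
    refine (norm_sum_le _ _).trans ?_
    simp only [AddChar.norm_apply, sum_const, nsmul_eq_mul, mul_one]
    exact_mod_cast hAp
  have hZ0 : 0 ≤ Z := norm_nonneg _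
  have hpr : (1000000 : ℝ) ≤ p := by exact_mod_cast hp
  have hp0 : (0 : ℝ) < p := by linarith
  have hNr : 313 * (p : ℝ) ≤ 1000 * #A := by exact_mod_cast hN
  have hK1 : 733 * (p : ℝ) ≤ 10000 * K := by
    have : 733 * p ≤ 10000 * K := by omega
    exact_mod_cast this
  have hK2 : 10000 * (K : ℝ) ≤ 733 * p + 10000 := by
    have : 10000 * K ≤ 733 * p + 10000 := by omega
    exact_mod_cast this
  generalize (K : ℝ) = κ at *
  have e1 : Z * (2 * Real.pi / p) ≤ 7 := by
    rw [mul_div_assoc', div_le_iff₀ hp0]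
    nlinarith [Real.pi_lt_d2, Real.pi_pos]
  have e2 : 0.0049 * (p : ℝ) ≤ 2 * (19 / 3 * κ ^ 3 / p ^ 2) := by
    have h1 : (0.0733 * p : ℝ) ^ 3 ≤ κ ^ 3 := pow_le_pow_left₀ (by positivity) (by linarith) 3
    have h2 : 2 * (19 / 3 * κ ^ 3 / (p : ℝ) ^ 2) = (38 / 3 * κ ^ 3) / p ^ 2 := by ring
    rw [h2, le_div_iff₀ (by positivity)]
    have h3 : (0.0733 * p : ℝ) ^ 3 = 0.0733 ^ 3 * p ^ 3 := by ring
    rw [h3] at h1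
    have h4 : (0 : ℝ) ≤ p ^ 3 := by positivity
    nlinarith
  have e3 : Z ≤ 0.1417 * p + 15 := by linarith
  have e4 : Z ≤ 0.1418 * p := by linarith
  have e5 : ((p : ℝ) - #A) ≤ 0.687 * p := by linarith
  have hAr : (#A : ℝ) ≤ p := by exact_mod_cast hAp
  have e6 : ((p : ℝ) - #A) * Z ≤ 0.687 * p * (0.1418 * p) :=
    mul_le_mul e5 e4 hZ0 (by positivity)
  have e7 : (0.313 * p : ℝ) ^ 2 ≤ (#A : ℝ) ^ 2 :=
    pow_le_pow_left₀ (by positivity) (by linarith) 2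
  have e8 : (0 : ℝ) < p ^ 2 := by positivity
  nlinarith

/-! ### Normalization -/

/-- A normalized sum-deficient set of residues modulo `p`, represented by integers in `[0, p)`:
the elements in a densest half arc have minimum `0` and maximum `L`, there are `ν` of them, they
have no common divisor, and no half arc containing `[0, L]` contains any other element of `S`. Sum
deficient means `|S + S| + |S| ≤ p`, as holds when `S + S` avoids a dilate of `S`. -/
structure Good (p : ℕ) (S : Finset ℕ) (N ν L : ℕ) : Prop where
  hp : 1000000 ≤ p
  hN : 313 * p ≤ 1000 * N
  hN' : 1000 * N < 313 * p + 1000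
  hν : 2298 * p ≤ 10000 * ν
  hL : 2 * L < p
  zero_mem : 0 ∈ S
  L_mem : L ∈ S
  card : #S = N
  card_le : #(S.filter (· ≤ L)) = ν
  mem_or : ∀ s ∈ S, s ≤ L ∨ p < 2 * s ∧ 2 * s < p + 2 * L
  gcd : ∀ g : ℕ, (∀ s ∈ S, s ≤ L → g ∣ s) → g = 1
  sum : #((S + S).image (· % p)) + N ≤ p

/-- The elements of `A` lying, after dilation by `d`, in the half arc starting at `c`. -/
def halfArc {p : ℕ} (A : Finset (ZMod p)) (d c : ZMod p) : Finset (ZMod p) :=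
  A.filter fun a => 2 * (d * a - c).val < p

lemma mem_halfArc {p : ℕ} {A : Finset (ZMod p)} {d c a : ZMod p} :
    a ∈ halfArc A d c ↔ a ∈ A ∧ 2 * (d * a - c).val < p := mem_filter

/-- A half arc capturing the largest number of elements, and among those a shortest one. -/
lemma exists_extremal {p : ℕ} [Fact p.Prime] (A : Finset (ZMod p)) :
    ∃ d : ZMod p, d ≠ 0 ∧ ∃ c : ZMod p, ∃ L : ℕ, 2 * L < p ∧
      (∀ d' ≠ 0, ∀ c', #(halfArc A d' c') ≤ #(halfArc A d c)) ∧
      (∀ a ∈ halfArc A d c, (d * a - c).val ≤ L) ∧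
      ((halfArc A d c).Nonempty → ∃ a ∈ halfArc A d c, (d * a - c).val = L) ∧
      (∀ d' ≠ 0, ∀ c', ∀ M, 2 * M < p → (∀ a ∈ halfArc A d c, (d' * a - c').val ≤ M) →
        L ≤ M) := by
  have hp := (Fact.out : p.Prime).pos
  set len : ZMod p × ZMod p → ℕ := fun q => (halfArc A q.1 q.2).sup fun a => (q.1 * a - q.2).val
    with hlen
  have hlenp : ∀ q, 2 * len q < p := by
    intro q
    have : len q ≤ (p - 1) / 2 := Finset.sup_le fun a ha => by
      have := (mem_halfArc.mp ha).2
      omega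
    omega
  obtain ⟨⟨d, c⟩, hd, hmax⟩ := exists_max_image
    (univ.filter fun q : ZMod p × ZMod p => q.1 ≠ 0)
    (fun q => (#(halfArc A q.1 q.2) : ℤ) * p - len q) ⟨(1, 0), by simp⟩
  have hd0 : d ≠ 0 := (mem_filter.mp hd).2
  have hmax' : ∀ d' ≠ 0, ∀ c', #(halfArc A d' c') ≤ #(halfArc A d c) := by
    intro d' hd' c'
    have h1 := hmax (d', c') (by simpa using hd')
    have h2 := hlenp (d', c')
    simp only at h1
    by_contra hlt
    rw [not_le] at hlt
    have h3 : (#(halfArc A d c) + 1 : ℤ) * p ≤ #(halfArc A d' c') * p := by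
      apply mul_le_mul_of_nonneg_right <;> omega
    rw [add_mul] at h3
    omega
  refine ⟨d, hd0, c, len (d, c), hlenp _, hmax', ?_, ?_, ?_⟩
  · exact fun a ha => le_sup (f := fun a => (d * a - c).val) ha
  · intro hne
    obtain ⟨a, ha, h⟩ := exists_mem_eq_sup _ hne fun a => (d * a - c).val
    exact ⟨a, ha, h.symm⟩
  · intro d' hd' c' M hM hall
    have hsub : halfArc A d c ⊆ halfArc A d' c' := fun a ha =>
      mem_halfArc.mpr ⟨(mem_halfArc.mp ha).1, by have := hall a ha; omega⟩
    have heq : halfArc A d c = halfArc A d' c' := eq_of_subset_of_card_le hsub (hmax' d' hd' c')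
    have h1 := hmax (d', c') (by simpa using hd')
    have h2 : len (d', c') ≤ M := Finset.sup_le fun a ha => by
      simp only at ha
      rw [← heq] at ha
      exact hall a ha
    simp only at h1
    rw [heq] at h1
    omega

/-- A set avoiding `a₁ + a₂ = x a₃` has an affine image which is `Good`: the extremal half arc
becomes `[0, L]`, and the equation acquires a constant term `κ`. -/
lemma exists_good {p : ℕ} [Fact p.Prime] (hp : 1000000 ≤ p) {A : Finset (ZMod p)}
    {x : ZMod p} (hx : x ≠ 0) (hN : 313 * p ≤ 1000 * #A) (hN' : 1000 * #A < 313 * p + 1000)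
    (hA : ∀ a ∈ A, ∀ b ∈ A, ∀ c ∈ A, a + b ≠ x * c) :
    ∃ S ν L, Good p S #A ν L ∧ ∃ κ : ZMod p,
      ∀ r ∈ S, ∀ s ∈ S, ∀ t ∈ S, ((r : ZMod p) + s) ≠ x * t + κ := by
  obtain ⟨d₁, hd₁, c₁, hν₁⟩ := exists_dense_arc hp hx hN hA
  obtain ⟨d, hd, c, L, hL, hmax, hle, hattain, hmin⟩ := exists_extremal A
  have hν : 2298 * p ≤ 10000 * #(halfArc A d c) :=
    hν₁.trans (Nat.mul_le_mul_left _ (hmax d₁ hd₁ c₁))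
  have hne : (halfArc A d c).Nonempty := card_pos.mp (by omega)
  obtain ⟨a₁, ha₁, hL₁⟩ := hattain hne
  set φ : ZMod p → ℕ := fun a => (d * a - c).val with hφ
  have hcast : ∀ a, (φ a : ZMod p) = d * a - c := fun a => by simp [hφ]
  have hinj : Function.Injective φ := fun a b hab => by
    have := congrArg (fun n : ℕ => (n : ZMod p)) hab
    simp only [hcast] at this
    simpa [hd] using this
  have hlt : ∀ a, φ a < p := fun a => ZMod.val_lt _
  have hodd : p % 2 = 1 := Nat.odd_iff.mp ((Fact.out : p.Prime).odd_of_ne_two (by omega))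
  have hmemle : ∀ a ∈ A, φ a ≤ L → a ∈ halfArc A d c := fun a ha h =>
    mem_halfArc.mpr ⟨ha, by simp only [hφ] at h; omega⟩
  refine ⟨A.image φ, #(halfArc A d c), L, ⟨hp, hN, hN', hν, hL, ?_, ?_, ?_, ?_, ?_, ?_, ?_⟩,
    (x - 2) * c, ?_⟩
  · -- otherwise the arc could be shortened from the left
    obtain ⟨a₀, ha₀, hmin₀⟩ := exists_min_image _ φ hne
    have h1 := hmin d hd (d * a₀) (L - φ a₀) (by omega) fun a ha => by
      have h2 : d * a - d * a₀ = (d * a - c) - (d * a₀ - c) := by ring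
      rw [h2]
      have h3 := val_sub_cases (d * a - c) (d * a₀ - c)
      have h4 := hmin₀ a ha
      have h5 := hle a ha
      simp only [hφ] at h4 ⊢
      omega
    have h2 : φ a₀ = 0 := by
      by_contra h0
      have h3 := hle a₀ ha₀
      simp only [hφ] at h0 h1
      omega
    exact mem_image.mpr ⟨a₀, (mem_halfArc.mp ha₀).1, h2⟩
  · exact mem_image.mpr ⟨a₁, (mem_halfArc.mp ha₁).1, hL₁⟩
  · exact card_image_of_injective _ hinj
  · rw [filter_image, card_image_of_injective _ hinj]
    congr 1
    ext a
    rw [mem_filter]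
    exact ⟨fun h => hmemle a h.1 h.2, fun h => ⟨(mem_halfArc.mp h).1, hle a h⟩⟩
  · intro s hs
    obtain ⟨a, ha, rfl⟩ := mem_image.mp hs
    by_contra hcon
    rw [not_or] at hcon
    have hnot : a ∉ halfArc A d c := fun h => hcon.1 (hle a h)
    have h2s : p < 2 * φ a := by
      by_contra h
      have h1 : 2 * φ a < p := by omega
      exact hnot (mem_halfArc.mpr ⟨ha, h1⟩)
    -- the half arc ending at `L` contains `a` as well
    have hsub : insert a (halfArc A d c) ⊆ halfArc A d (c - ((p / 2 - L : ℕ) : ZMod p)) := by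
      intro b hb
      have h1 : d * b - (c - ((p / 2 - L : ℕ) : ZMod p)) =
        (d * b - c) + ((p / 2 - L : ℕ) : ZMod p) := by ring
      have h2 := val_add_nat_cases (d * b - c) (show p / 2 - L < p by omega)
      refine mem_halfArc.mpr ⟨?_, ?_⟩
      · rcases mem_insert.mp hb with rfl | hb
        · exact ha
        · exact (mem_halfArc.mp hb).1
      · rw [h1]
        rcases mem_insert.mp hb with rfl | hb
        · have h3 := hlt b
          simp only [hφ] at h2s hcon h3
          omega
        · have h3 := hle b hb
          omega
    have h1 := card_le_card hsub
    rw [card_insert_of_notMem hnot] at h1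
    have := hmax d hd (c - ((p / 2 - L : ℕ) : ZMod p))
    omega
  · -- otherwise the arc could be shortened by a dilation
    intro g hg
    have hg' : ∀ a ∈ halfArc A d c, g ∣ φ a := fun a ha =>
      hg _ (mem_image_of_mem _ (mem_halfArc.mp ha).1) (hle a ha)
    have hL0 : 0 < L := by
      by_contra h0
      have : #(halfArc A d c) ≤ #({0} : Finset ℕ) := by
        refine card_le_card_of_injOn φ (fun a ha => ?_) hinj.injOn
        have := hle a ha
        simp only [coe_singleton, Set.mem_singleton_iff, hφ]
        omega
      rw [card_singleton] at this
      omega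
    have hgL : g ∣ L := hL₁ ▸ hg' a₁ ha₁
    have hgle := Nat.le_of_dvd hL0 hgL
    have hg0 : 0 < g := Nat.pos_of_dvd_of_pos hgL hL0
    have hgp : (g : ZMod p) ≠ 0 := by
      intro h
      rw [ZMod.natCast_eq_zero_iff] at h
      have := Nat.le_of_dvd hg0 h
      omega
    by_contra hg1
    have hdiv : L / g < L := Nat.div_lt_self hL0 (by omega)
    have h1 := hmin ((g : ZMod p)⁻¹ * d) (mul_ne_zero (inv_ne_zero hgp) hd)
      ((g : ZMod p)⁻¹ * c) (L / g) (by omega) fun a ha => by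
        obtain ⟨k, hk⟩ := hg' a ha
        have h2 : (g : ZMod p)⁻¹ * d * a - (g : ZMod p)⁻¹ * c = (k : ZMod p) := by
          rw [mul_assoc, ← mul_sub, ← hcast a, hk, Nat.cast_mul, inv_mul_cancel_left₀ hgp]
        have h3 := hle a ha
        have h4 : k ≤ L / g := by
          rw [Nat.le_div_iff_mul_le hg0, mul_comm, ← hk]
          exact h3
        rw [h2, ZMod.val_cast_of_lt (by omega)]
        exact h4
    omega
  · have h1 : #((A.image φ + A.image φ).image (· % p)) ≤ #(A + A) := by
      refine card_le_card_of_surjOn (fun v => (d * v - 2 * c).val) ?_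
      intro n hn
      obtain ⟨m, hm, rfl⟩ := mem_image.mp hn
      obtain ⟨r, hr, s, hs, rfl⟩ := mem_add.mp hm
      obtain ⟨a, ha, rfl⟩ := mem_image.mp hr
      obtain ⟨b, hb, rfl⟩ := mem_image.mp hs
      refine ⟨a + b, add_mem_add ha hb, ?_⟩
      simp only
      rw [← ZMod.val_natCast, Nat.cast_add, hcast, hcast]
      congr 1
      ring
    have h2 : Disjoint (A + A) (A.image (x * ·)) := by
      rw [disjoint_left]
      intro v hv hv'
      obtain ⟨a, ha, b, hb, rfl⟩ := mem_add.mp hv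
      obtain ⟨e, he, hv'⟩ := mem_image.mp hv'
      exact hA a ha b hb e he hv'.symm
    have h3 := card_le_univ (A + A ∪ A.image (x * ·))
    rw [card_union_of_disjoint h2, ZMod.card,
      card_image_of_injective _ (mul_right_injective₀ hx)] at h3
    omega
  · intro r hr s hs t ht
    obtain ⟨a, ha, rfl⟩ := mem_image.mp hr
    obtain ⟨b, hb, rfl⟩ := mem_image.mp hs
    obtain ⟨e, he, rfl⟩ := mem_image.mp ht
    rw [hcast, hcast, hcast]
    intro h
    apply hA a ha b hb e he
    apply mul_left_cancel₀ hd
    linear_combination h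

/-! ### The set is contained in an interval -/

/-- The reflection `s ↦ L - s` modulo `p`, on integers in `[0, p)`. -/
def flip (p L s : ℕ) : ℕ := if s ≤ L then L - s else p + L - s

namespace Good

variable {p N ν L : ℕ} {S : Finset ℕ}

lemma flip_mem_iff (hg : Good p S N ν L) {s : ℕ} (hs : s ∈ S) :
    flip p L s ≤ L ↔ s ≤ L := by
  have := hg.mem_or s hs
  have := hg.hL
  unfold flip
  split_ifs <;> omega

lemma flip_injOn (hg : Good p S N ν L) : Set.InjOn (flip p L) S := by
  intro a ha b hb hab
  have := hg.mem_or a ha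
  have := hg.mem_or b hb
  have := hg.hL
  unfold flip at hab
  split_ifs at hab <;> omega

lemma reflect (hg : Good p S N ν L) : Good p (S.image (flip p L)) N ν L := by
  have hL := hg.hL
  have : NeZero p := ⟨by omega⟩
  refine ⟨hg.hp, hg.hN, hg.hN', hg.hν, hL, ?_, ?_, ?_, ?_, ?_, ?_, ?_⟩
  · exact mem_image.mpr ⟨L, hg.L_mem, by simp [flip]⟩
  · exact mem_image.mpr ⟨0, hg.zero_mem, by simp [flip]⟩
  · rw [card_image_of_injOn hg.flip_injOn, hg.card]
  · have h1 : (S.image (flip p L)).filter (· ≤ L) = (S.filter (· ≤ L)).image (flip p L) := by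
      rw [filter_image]
      congr 1
      exact filter_congr fun s hs => hg.flip_mem_iff hs
    rw [h1, card_image_of_injOn, hg.card_le]
    exact hg.flip_injOn.mono (coe_subset.mpr (filter_subset _ _))
  · intro s' hs'
    obtain ⟨s, hs, rfl⟩ := mem_image.mp hs'
    have := hg.mem_or s hs
    unfold flip
    split_ifs <;> omega
  · intro g hgd
    have hflip : ∀ s ∈ S, s ≤ L → g ∣ L - s := by
      intro s hs hsL
      have h1 := hgd _ (mem_image_of_mem _ hs) ((hg.flip_mem_iff hs).mpr hsL)
      rwa [flip, if_pos hsL] at h1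
    have hgL : g ∣ L := by simpa using hflip 0 hg.zero_mem (Nat.zero_le _)
    refine hg.gcd g fun s hs hsL => ?_
    have := Nat.dvd_sub hgL (hflip s hs hsL)
    rwa [Nat.sub_sub_self hsL] at this
  · have hc : ∀ s ∈ S, ((flip p L s : ℕ) : ZMod p) = L - s := by
      intro s hs
      have := hg.mem_or s hs
      unfold flip
      split_ifs with h
      · rw [Nat.cast_sub h]
      · rw [Nat.cast_sub (by omega)]; simp
    refine (Nat.add_le_add_right (card_le_card_of_surjOn
      (fun n : ℕ => (2 * (L : ZMod p) - (n : ZMod p)).val) ?_) _).trans hg.sum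
    intro n hn
    obtain ⟨m, hm, rfl⟩ := mem_image.mp hn
    obtain ⟨a, ha, b, hb, rfl⟩ := mem_add.mp hm
    obtain ⟨s, hs, rfl⟩ := mem_image.mp ha
    obtain ⟨t, ht, rfl⟩ := mem_image.mp hb
    refine ⟨(s + t) % p, mem_image_of_mem _ (add_mem_add hs ht), ?_⟩
    simp only
    rw [ZMod.natCast_mod, ← ZMod.val_natCast p (flip p L s + flip p L t)]
    congr 1
    push_cast
    rw [hc s hs, hc t ht]
    ring

lemma card_add_le (hg : Good p S N ν L) {X Y : Finset ℕ} (hX : X ⊆ S) (hY : Y ⊆ S)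
    (hXY : ∀ x ∈ X, ∀ y ∈ Y, x + y < p) : #(X + Y) + N ≤ p := by
  refine (Nat.add_le_add_right (card_le_card fun n hn => ?_) _).trans hg.sum
  obtain ⟨x, hx, y, hy, rfl⟩ := mem_add.mp hn
  exact mem_image.mpr ⟨x + y, add_mem_add (hX hx) (hY hy), Nat.mod_eq_of_lt (hXY x hx y hy)⟩

lemma one_le_L (hg : Good p S N ν L) : 1 ≤ L := by
  have h1 : #(S.filter (· ≤ L)) ≤ #(range (L + 1)) := card_le_card fun s hs => by
    have := (mem_filter.mp hs).2
    rw [mem_range]; omega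
  rw [hg.card_le, card_range] at h1
  have := hg.hν
  have := hg.hp
  omega

/-- The Lev–Smeliansky bound for the sumset of `[0, L] ∩ S` with itself: the alternative bound
`3 ν - 3` is excluded because `0.313 + 3 * 0.2298 > 1`. -/
lemma le_card_add (hg : Good p S N ν L) :
    L + ν ≤ #(S.filter (· ≤ L) + S.filter (· ≤ L)) ∧ L + ν + N ≤ p := by
  have h1 := hg.card_add_le (filter_subset (· ≤ L) S) (filter_subset (· ≤ L) S)
    fun x hx y hy => by
      have := (mem_filter.mp hx).2
      have := (mem_filter.mp hy).2
      have := hg.hL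
      omega
  have h2 := lev_smeliansky (X := S.filter (· ≤ L)) (Y := S.filter (· ≤ L)) hg.one_le_L
    (mem_filter.mpr ⟨hg.zero_mem, Nat.zero_le _⟩) (mem_filter.mpr ⟨hg.L_mem, le_rfl⟩)
    (fun x hx => (mem_filter.mp hx).2) (mem_filter.mpr ⟨hg.zero_mem, Nat.zero_le _⟩)
    (fun x hx => (mem_filter.mp hx).2)
    (fun g h => hg.gcd g fun s hs hsL => h s (mem_filter.mpr ⟨hs, hsL⟩))
  rw [hg.card_le] at h2
  have := hg.hν
  have := hg.hN
  have := hg.hp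
  omega

/-- The sum of the part of `S` below `p - L` with `[0, L] ∩ S` involves no reduction modulo `p`,
so the Lev–Smeliansky bound applies and forces that part of `S` to be short. -/
lemma le_of_add_lt (hg : Good p S N ν L) {s : ℕ} (hs : s ∈ S) (hsL : s + L < p) : s ≤ L := by
  have hL := hg.hL
  set X := S.filter (fun s => s + L < p) with hX
  set Q := S.filter (· ≤ L) with hQ
  have hQX : Q ⊆ X := fun q hq => by
    rw [hQ, mem_filter] at hq
    rw [hX, mem_filter]
    exact ⟨hq.1, by omega⟩
  have hLX : L ∈ X := hQX (mem_filter.mpr ⟨hg.L_mem, le_rfl⟩)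
  obtain ⟨M, hM, hmax⟩ := exists_max_image X id ⟨L, hLX⟩
  simp only [id] at hmax
  have hLM := hmax L hLX
  have hsM := hmax s (mem_filter.mpr ⟨hs, hsL⟩)
  have hMS := (mem_filter.mp hM).1
  have h1 := hg.card_add_le (X := X) (Y := Q) (filter_subset _ _) (filter_subset _ _)
    fun x hx y hy => by
      have := (mem_filter.mp hx).2
      have := (mem_filter.mp hy).2
      omega
  have h2 := lev_smeliansky (X := X) (Y := Q) (ℓ := M) (hg.one_le_L.trans hLM)
    (mem_filter.mpr ⟨hg.zero_mem, by omega⟩) hM hmax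
    (mem_filter.mpr ⟨hg.zero_mem, Nat.zero_le _⟩)
    (fun x hx => (mem_filter.mp hx).2.trans hLM)
    (fun g h => hg.gcd g fun s hs hsL => h s (hQX (mem_filter.mpr ⟨hs, hsL⟩)))
  have h3 := card_le_card hQX
  have h4 : #Q = ν := hg.card_le
  have := hg.hν
  have := hg.hN
  have := hg.hp
  have := hg.mem_or M hMS
  omega

/-- Elements of `S` beyond `L` lie in the short interval `[p - L, 2 L]` opposite to `[0, L]`. -/
lemma mem_or' (hg : Good p S N ν L) {s : ℕ} (hs : s ∈ S) :
    s ≤ L ∨ p ≤ s + L ∧ s ≤ 2 * L := by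
  have hL := hg.hL
  have h1 := hg.mem_or s hs
  by_contra hcon
  have hsL : ¬ s ≤ L := by omega
  have h2 : ¬ s + L < p := fun h => hsL (hg.le_of_add_lt hs h)
  have h3 := hg.reflect.le_of_add_lt (mem_image_of_mem (flip p L) hs)
    (by unfold flip; rw [if_neg hsL]; omega)
  rw [hg.flip_mem_iff hs] at h3
  exact hsL h3

end Good

/-- Cauchy–Davenport for a difference set `D - Z` with `Z` below `D`. -/
lemma card_sub_ge {D Z : Finset ℕ} {m : ℕ} (hD : D.Nonempty) (hZ : Z.Nonempty)
    (hDm : ∀ d ∈ D, m ≤ d) (hZm : ∀ z ∈ Z, z ≤ m) : #D + #Z ≤ #(D - Z) + 1 := by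
  have h1 : #(Z.image (m - ·)) = #Z := card_image_of_injOn fun a ha b hb hab => by
    have := hZm a ha
    have := hZm b hb
    replace hab : m - a = m - b := hab
    omega
  have h2 : #D + #(Z.image (m - ·)) - 1 ≤ #(D + Z.image (m - ·)) :=
    cauchy_davenport_add_of_linearOrder_isCancelAdd hD (hZ.image _)
  have h3 : D + Z.image (m - ·) ⊆ (D - Z).image (· + m) := by
    intro n hn
    obtain ⟨d, hd, y, hy, rfl⟩ := mem_add.mp hn
    obtain ⟨z, hz, rfl⟩ := mem_image.mp hy
    refine mem_image.mpr ⟨d - z, sub_mem_sub hd hz, ?_⟩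
    have := hDm d hd
    have := hZm z hz
    omega
  have h4 := (card_le_card h3).trans card_image_le
  omega

namespace Good

variable {p N ν L : ℕ} {S : Finset ℕ}

/-- Suppose that the set `Z` of elements of `S` beyond `L` is not empty. Every `q` in `[0, L] ∩ S`
is either of the lower type, where no sum `z + q` with `z ∈ Z` reaches `p`, or of the upper type,
where every such sum exceeds `2 L`. Every element of upper type exceeds every element of lower
type, by more than `L / 3`.

Most integers `d` between `2 L` and `p` are not in `S + S`, and then all `d - z` are missing from
`[0, L] ∩ S`; this bounds `Z`, and it does so twice if `q` is of neither type. -/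
lemma types (hg : Good p S N ν L) (hne : ∃ z ∈ S, L < z) :
    2 * N + ν ≤ 2 * L + 3 ∧
    (∀ q ∈ S, q ≤ L → (∀ z ∈ S, L < z → z + q < p) ∨ (∀ z ∈ S, L < z → 2 * L < z + q)) ∧
    (∀ q ∈ S, ∀ q' ∈ S, (∀ z ∈ S, L < z → z + q < p) → (∀ z ∈ S, L < z → 2 * L < z + q') →
      L < 3 * (q' - q) ∧ q < q') := by
  have hL := hg.hL
  have hν := hg.hν
  have hN := hg.hN
  have hp := hg.hp
  obtain ⟨hQQ, hLp⟩ := hg.le_card_add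
  set Q := S.filter (· ≤ L) with hQ
  have hQc : #Q = ν := hg.card_le
  set Z := S.filter (fun s => ¬ s ≤ L) with hZ
  have hZc : ν + #Z = N := by
    rw [← hg.card, ← hQc]
    exact card_filter_add_card_filter_not _
  have hZmem : ∀ z ∈ Z, z ∈ S ∧ p ≤ z + L ∧ z ≤ 2 * L := by
    intro z hz
    rw [hZ, mem_filter] at hz
    have := hg.mem_or' hz.1
    exact ⟨hz.1, by omega⟩
  have hmemZ : ∀ z ∈ S, L < z → z ∈ Z := fun z hz h => mem_filter.mpr ⟨hz, by omega⟩
  have hZlt : ∀ z ∈ Z, L < z := fun z hz => by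
    have := (mem_filter.mp hz).2
    omega
  have hZne : Z.Nonempty := by
    obtain ⟨z, hz, h⟩ := hne
    exact ⟨z, hmemZ z hz h⟩
  set T := (S + S).image (· % p) with hT
  have hTmem : ∀ s ∈ S, ∀ t ∈ S, s + t < p → s + t ∈ T := fun s hs t ht h =>
    mem_image.mpr ⟨s + t, add_mem_add hs ht, Nat.mod_eq_of_lt h⟩
  set R := (Ioo (2 * L) p).filter (· ∈ T) with hR
  set D := (Ioo (2 * L) p).filter (fun n => ¬ n ∈ T) with hD
  have hRD : #R + #D = p - 2 * L - 1 := by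
    rw [← Nat.card_Ioo]
    exact card_filter_add_card_filter_not _
  -- `R` and `Q + Q` are disjoint parts of `T`
  have hRle : L + ν + #R + N ≤ p := by
    have hdisj : Disjoint (Q + Q) R := by
      rw [disjoint_left]
      intro n hn hn'
      obtain ⟨a, ha, b, hb, rfl⟩ := mem_add.mp hn
      have h1 := (mem_filter.mp ha).2
      have h2 := (mem_filter.mp hb).2
      have h3 := (mem_Ioo.mp (mem_filter.mp hn').1).1
      omega
    have hsub : Q + Q ∪ R ⊆ T := by
      refine union_subset ?_ (fun n hn => (mem_filter.mp hn).2)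
      intro n hn
      obtain ⟨a, ha, b, hb, rfl⟩ := mem_add.mp hn
      have h1 := mem_filter.mp ha
      have h2 := mem_filter.mp hb
      exact hTmem a h1.1 b h2.1 (by omega)
    have h1 := card_le_card hsub
    rw [card_union_of_disjoint hdisj] at h1
    have h2 : #T + N ≤ p := hg.sum
    omega
  have hDne : D.Nonempty := card_pos.mp (by omega)
  have hDmem : ∀ d ∈ D, 2 * L < d ∧ d < p ∧ d ∉ T := fun d hd => by
    have h := mem_filter.mp hd
    have h' := mem_Ioo.mp h.1
    exact ⟨h'.1, h'.2, h.2⟩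
  -- differences `d - z` are holes of `S` in `[0, L]`
  set W := (range (L + 1)).filter (fun n => ¬ n ∈ S) with hW
  have hWc : ν + #W = L + 1 := by
    have h1 : (range (L + 1)).filter (fun n => n ∈ S) = Q := by
      ext n
      simp only [hQ, mem_filter, mem_range]
      exact ⟨fun h => ⟨h.2, by omega⟩, fun h => ⟨by omega, h.1⟩⟩
    have h2 := card_filter_add_card_filter_not (s := range (L + 1)) (fun n => n ∈ S)
    rwa [h1, hQc, card_range] at h2
  have hDZ : ∀ Z' ⊆ Z, D - Z' ⊆ W := by
    intro Z' hZ' n hn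
    obtain ⟨d, hd, z, hz, rfl⟩ := mem_sub.mp hn
    have h1 := hDmem d hd
    have h2 := hZmem z (hZ' hz)
    refine mem_filter.mpr ⟨mem_range.mpr (by omega), fun h => h1.2.2 ?_⟩
    have h3 := hTmem _ h2.1 _ h (by omega)
    rwa [Nat.add_sub_cancel' (by omega)] at h3
  have hcard : ∀ Z' ⊆ Z, Z'.Nonempty → #D + #Z' ≤ #(D - Z') + 1 := fun Z' hZ' hne' =>
    card_sub_ge hDne hne' (m := 2 * L) (fun d hd => (hDmem d hd).1.le)
      fun z hz => (hZmem z (hZ' hz)).2.2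
  have h2L : 2 * N + ν ≤ 2 * L + 3 := by
    have h1 := hcard Z Subset.rfl hZne
    have h2 := card_le_card (hDZ Z Subset.rfl)
    omega
  have hmid : ∀ q ∈ S, #(Z.filter fun z => 2 * L < z + q ∧ z + q < p) ≤ #R := by
    intro q hq
    refine card_le_card_of_injOn (· + q) (fun z hz => ?_) (fun a _ b _ h => by simpa using h)
    have h := mem_filter.mp hz
    exact mem_filter.mpr ⟨mem_Ioo.mpr h.2, hTmem z (hZmem z h.1).1 q hq h.2.2⟩
  have hsplit : ∀ q ∈ S, q ≤ L →
      (∀ z ∈ S, L < z → z + q < p) ∨ (∀ z ∈ S, L < z → 2 * L < z + q) := by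
    intro q hq hqL
    by_contra hcon
    rw [not_or] at hcon
    push Not at hcon
    obtain ⟨⟨z₂, hz₂, hLz₂, hz₂q⟩, ⟨z₁, hz₁, hLz₁, hz₁q⟩⟩ := hcon
    set Z₁ := Z.filter (fun z => z + q ≤ 2 * L) with hZ₁
    set Z₂ := Z.filter (fun z => p ≤ z + q) with hZ₂
    have c1 := hcard Z₁ (filter_subset _ _) ⟨z₁, mem_filter.mpr ⟨hmemZ z₁ hz₁ hLz₁, hz₁q⟩⟩
    have c2 := hcard Z₂ (filter_subset _ _) ⟨z₂, mem_filter.mpr ⟨hmemZ z₂ hz₂ hLz₂, hz₂q⟩⟩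
    have c3 : #Z₁ + #Z₂ + #(Z.filter fun z => 2 * L < z + q ∧ z + q < p) = #Z := by
      simp only [hZ₁, hZ₂, card_filter]
      rw [card_eq_sum_ones, ← sum_add_distrib, ← sum_add_distrib]
      refine sum_congr rfl fun z _ => ?_
      split_ifs <;> omega
    have c4 := hmid q hq
    have hdisj : Disjoint (D - Z₁) (D - Z₂) := by
      rw [disjoint_left]
      intro n hn hn'
      obtain ⟨d, hd, z, hz, rfl⟩ := mem_sub.mp hn
      obtain ⟨d', hd', z', hz', hdz⟩ := mem_sub.mp hn'
      have h1 := hDmem d hd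
      have h2 := hDmem d' hd'
      have h3 := (mem_filter.mp hz).2
      have h4 := (mem_filter.mp hz').2
      have h5 := hZmem z (mem_filter.mp hz).1
      have h6 := hZmem z' (mem_filter.mp hz').1
      omega
    have c5 := card_le_card (union_subset (hDZ Z₁ (filter_subset _ _))
      (hDZ Z₂ (filter_subset _ _)))
    rw [card_union_of_disjoint hdisj] at c5
    omega
  refine ⟨h2L, hsplit, ?_⟩
  intro q hq q' hq' hqB hqA
  -- the elements `z` with `p ≤ z + q'` and `z + q ≤ 2 L`
  set Y := Z.filter (fun z => p ≤ z + q' ∧ z + q ≤ 2 * L) with hY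
  have c1 : #Z ≤ #Y + #(Z.filter fun z => 2 * L < z + q ∧ z + q < p) +
      #(Z.filter fun z => 2 * L < z + q' ∧ z + q' < p) := by
    simp only [hY, card_filter]
    rw [card_eq_sum_ones, ← sum_add_distrib, ← sum_add_distrib]
    refine sum_le_sum fun z hz => ?_
    have h1 := hqB z (hZmem z hz).1 (hZlt z hz)
    have h2 := hqA z (hZmem z hz).1 (hZlt z hz)
    split_ifs <;> omega
  have c2 := hmid q hq
  have c3 := hmid q' hq'
  have c4 : #Y ≤ #(Icc (p - q') (2 * L - q)) := by
    refine card_le_card fun z hz => ?_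
    have h := (mem_filter.mp hz).2
    rw [mem_Icc]
    omega
  rw [Nat.card_Icc] at c4
  omega

/-- The case in which `u + v > L + q` for `u`, `v` of upper type and `q` of lower type. Then the
sums of two elements of upper type are disjoint from those involving an element of lower type,
which makes `S + S` too large. -/
lemma false_of_upper (hg : Good p S N ν L) (hne : ∃ z ∈ S, L < z)
    (halt : ∀ q ∈ S, ∀ u ∈ S, ∀ v ∈ S, q ≤ L → u ≤ L → v ≤ L →
      (∀ z ∈ S, L < z → z + q < p) → (∀ z ∈ S, L < z → 2 * L < z + u) →
      (∀ z ∈ S, L < z → 2 * L < z + v) → L + q < u + v) : False := by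
  have hL := hg.hL
  have hν := hg.hν
  have hN := hg.hN
  have hp := hg.hp
  obtain ⟨h2L, hsplit, hsep⟩ := hg.types hne
  obtain ⟨_, hLp⟩ := hg.le_card_add
  obtain ⟨z₀, hz₀, hLz₀⟩ := hne
  set Q := S.filter (· ≤ L) with hQ
  have hQc : #Q = ν := hg.card_le
  set Q₁ := Q.filter (fun q => ∀ z ∈ S, L < z → z + q < p) with hQ₁
  set Q₂ := Q.filter (fun q => ¬ ∀ z ∈ S, L < z → z + q < p) with hQ₂
  have hQ₁₂ : #Q₁ + #Q₂ = ν := by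
    rw [← hQc]; exact card_filter_add_card_filter_not _
  have hQ₁S : Q₁ ⊆ S := (filter_subset _ _).trans (filter_subset _ _)
  have hQS : Q ⊆ S := filter_subset _ _
  have hQ₁mem : ∀ q ∈ Q₁, q ∈ S ∧ q ≤ L ∧ ∀ z ∈ S, L < z → z + q < p := fun q hq => by
    have h := mem_filter.mp hq
    have h' := mem_filter.mp h.1
    exact ⟨h'.1, h'.2, h.2⟩
  have hQ₂mem : ∀ q ∈ Q₂, q ∈ S ∧ q ≤ L ∧ ∀ z ∈ S, L < z → 2 * L < z + q := fun q hq => by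
    have h := mem_filter.mp hq
    have h' := mem_filter.mp h.1
    exact ⟨h'.1, h'.2, (hsplit q h'.1 h'.2).resolve_left h.2⟩
  have h0Q : 0 ∈ Q := mem_filter.mpr ⟨hg.zero_mem, Nat.zero_le _⟩
  have hLQ : L ∈ Q := mem_filter.mpr ⟨hg.L_mem, le_rfl⟩
  have h0Q₁ : 0 ∈ Q₁ := mem_filter.mpr ⟨h0Q, fun z hz hLz => by
    have := hg.mem_or' hz
    omega⟩
  have hLQ₂ : L ∈ Q₂ := mem_filter.mpr ⟨hLQ, fun h => by
    have := h z₀ hz₀ hLz₀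
    have := hg.mem_or' hz₀
    omega⟩
  -- bound the lower part using sums with the whole of `S`
  obtain ⟨M, hM, hmax⟩ := exists_max_image S id ⟨L, hg.L_mem⟩
  simp only [id] at hmax
  have hLM := hmax L hg.L_mem
  have hz₀M := hmax z₀ hz₀
  have hMp := hg.mem_or' hM
  have a1 := hg.card_add_le (X := S) (Y := Q₁) Subset.rfl hQ₁S fun s hs q hq => by
    by_cases h : L < s
    · exact (hQ₁mem q hq).2.2 s hs h
    · have := (hQ₁mem q hq).2.1
      omega
  have a2 := lev_smeliansky (X := S) (Y := Q₁) (ℓ := M) (hg.one_le_L.trans hLM) hg.zero_mem hM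
    hmax h0Q₁ (fun q hq => (hQ₁mem q hq).2.1.trans hLM)
    (fun g h => hg.gcd g fun s hs _ => h s hs)
  rw [hg.card] at a2
  have b1 := hg.card_add_le hQS hQS fun x hx y hy => by
    have := (mem_filter.mp hx).2
    have := (mem_filter.mp hy).2
    omega
  have b2 := lev_smeliansky (X := Q) (Y := Q₁) (ℓ := L) hg.one_le_L h0Q hLQ
    (fun q hq => (mem_filter.mp hq).2) h0Q₁ (fun q hq => (hQ₁mem q hq).2.1)
    (fun g h => hg.gcd g fun s hs hsL => h s (mem_filter.mpr ⟨hs, hsL⟩))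
  have b3 : #Q₂ + #Q₂ - 1 ≤ #(Q₂ + Q₂) :=
    cauchy_davenport_add_of_linearOrder_isCancelAdd ⟨L, hLQ₂⟩ ⟨L, hLQ₂⟩
  have hdisj : Disjoint (Q + Q₁) (Q₂ + Q₂) := by
    rw [disjoint_left]
    intro n hn hn'
    obtain ⟨a, ha, b, hb, rfl⟩ := mem_add.mp hn
    obtain ⟨u, hu, v, hv, huv⟩ := mem_add.mp hn'
    have hb' := hQ₁mem b hb
    have hu' := hQ₂mem u hu
    have hv' := hQ₂mem v hv
    have := halt b hb'.1 u hu'.1 v hv'.1 hb'.2.1 hu'.2.1 hv'.2.1 hb'.2.2 hu'.2.2 hv'.2.2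
    have := (mem_filter.mp ha).2
    omega
  have b4 := card_le_card (union_subset
    (add_subset_add_left (filter_subset _ _) : Q + Q₁ ⊆ Q + Q)
    (add_subset_add (filter_subset _ _) (filter_subset _ _) : Q₂ + Q₂ ⊆ Q + Q))
  rw [card_union_of_disjoint hdisj] at b4
  have := hg.hN'
  omega

/-- A normalized set is contained in the interval `[0, L]`. -/
lemma le_L (hg : Good p S N ν L) : ∀ s ∈ S, s ≤ L := by
  by_contra hcon
  push Not at hcon
  obtain ⟨_, _, hsep⟩ := hg.types hcon
  have hL := hg.hL
  refine hg.false_of_upper hcon fun q hq u hu v hv hqL huL hvL hqB huA hvA => ?_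
  by_contra hle
  -- otherwise the mirror image is in the situation of `false_of_upper`
  refine hg.reflect.false_of_upper ?_ ?_
  · obtain ⟨z, hz, hLz⟩ := hcon
    refine ⟨_, mem_image_of_mem _ hz, ?_⟩
    rw [← not_le, hg.flip_mem_iff hz, not_le]
    exact hLz
  · intro q' hq' u' hu' v' hv' hqL' huL' hvL' hqB' huA' hvA'
    obtain ⟨b, hb, rfl⟩ := mem_image.mp hq'
    obtain ⟨a, ha, rfl⟩ := mem_image.mp hu'
    obtain ⟨c, hc, rfl⟩ := mem_image.mp hv'
    rw [hg.flip_mem_iff hb] at hqL'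
    rw [hg.flip_mem_iff ha] at huL'
    rw [hg.flip_mem_iff hc] at hvL'
    have hz : ∀ z ∈ S, L < z → flip p L z = p + L - z ∧ z < p ∧ flip p L z ∈ S.image (flip p L) ∧
        L < flip p L z := by
      intro z hz hLz
      refine ⟨if_neg (by omega), ?_, mem_image_of_mem _ hz, ?_⟩
      · have := hg.mem_or' hz
        omega
      · rw [← not_le, hg.flip_mem_iff hz]; omega
    have eb : flip p L b = L - b := if_pos hqL'
    have ea : flip p L a = L - a := if_pos huL'
    have ec : flip p L c = L - c := if_pos hvL'
    rw [eb] at hqB'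
    rw [ea] at huA'
    rw [ec] at hvA'
    rw [ea, eb, ec]
    have tb : ∀ z ∈ S, L < z → 2 * L < z + b := fun z hzS hLz => by
      obtain ⟨h1, h2, h3, h4⟩ := hz z hzS hLz
      have := hqB' _ h3 h4
      omega
    have ta : ∀ z ∈ S, L < z → z + a < p := fun z hzS hLz => by
      obtain ⟨h1, h2, h3, h4⟩ := hz z hzS hLz
      have := huA' _ h3 h4
      omega
    have tc : ∀ z ∈ S, L < z → z + c < p := fun z hzS hLz => by
      obtain ⟨h1, h2, h3, h4⟩ := hz z hzS hLz
      have := hvA' _ h3 h4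
      omega
    have s1 := hsep a ha b hb ta tb
    have s2 := hsep c hc b hb tc tb
    have s3 := hsep q hq u hu hqB huA
    have s4 := hsep q hq v hv hqB hvA
    have s5 := hsep a ha u hu ta huA
    have s6 := hsep c hc u hu tc huA
    have s7 := hsep a ha v hv ta hvA
    have s8 := hsep c hc v hv tc hvA
    omega

end Good

/-! ### Ratios of sums -/

/-- Two integers that are congruent modulo `p` and less than `p` apart are equal. -/
lemma eq_of_cast_eq {p : ℕ} {a b : ℤ} (h : (a : ZMod p) = b) (h1 : a - b < p)
    (h2 : b - a < p) : a = b := by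
  have h3 := (ZMod.intCast_eq_intCast_iff_dvd_sub a b p).mp h
  obtain ⟨c, hc⟩ := h3
  have hp : (0 : ℤ) < p := by
    by_contra hneg
    omega
  have h4 : c < 1 := by nlinarith
  have h5 : -1 < c := by nlinarith
  have h6 : c = 0 := by omega
  rw [h6] at hc
  omega

namespace Good

variable {p N ν L : ℕ} {S : Finset ℕ}

/-- The set `S` misses `L + 1 - N` elements of `[0, L]`, so an injection of an interval into `[0,
L]` hits the missing elements at most that often. -/
lemma card_miss (hg : Good p S N ν L) {u v : ℕ} {f : ℕ → ℕ} (hf : Set.InjOn f (Icc u v))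
    (hfL : ∀ a ∈ Icc u v, f a ≤ L) : #((Icc u v).filter fun a => ¬ f a ∈ S) + N ≤ L + 1 := by
  have h1 : #((Icc u v).filter fun a => ¬ f a ∈ S) ≤ #(range (L + 1) \ S) := by
    refine card_le_card_of_injOn f (fun a ha => ?_)
      (hf.mono (coe_subset.mpr (filter_subset _ _)))
    have h := mem_filter.mp ha
    have := hfL a h.1
    exact mem_sdiff.mpr ⟨mem_range.mpr (by omega), h.2⟩
  have hsub : S ⊆ range (L + 1) := fun s hs => by
    have := hg.le_L s hs
    rw [mem_range]; omega
  have h2 := card_sdiff_add_card_eq_card hsub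
  rw [hg.card, card_range] at h2
  omega

/-- Pigeonhole for three simultaneous memberships. -/
lemma exists_triple (hg : Good p S N ν L) {v : ℕ} (k : ℕ) (hv : v + 2 * k ≤ L)
    (hlen : 3 * (L + 1) ≤ v + 3 * N) : ∃ a, a ∈ S ∧ a + k ∈ S ∧ a + 2 * k ∈ S := by
  have h1 := hg.card_miss (u := 0) (v := v) (f := fun a => a) (fun a _ b _ h => h)
    (fun a ha => by have := mem_Icc.mp ha; omega)
  have h2 := hg.card_miss (u := 0) (v := v) (f := fun a => a + k)
    (fun a _ b _ h => Nat.add_right_cancel h)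
    (fun a ha => by have := mem_Icc.mp ha; omega)
  have h3 := hg.card_miss (u := 0) (v := v) (f := fun a => a + 2 * k)
    (fun a _ b _ h => Nat.add_right_cancel h)
    (fun a ha => by have := mem_Icc.mp ha; omega)
  by_contra! hcon
  have h4 : Icc 0 v ⊆ ((Icc 0 v).filter fun a => ¬ a ∈ S) ∪
      ((Icc 0 v).filter fun a => ¬ a + k ∈ S) ∪
      ((Icc 0 v).filter fun a => ¬ a + 2 * k ∈ S) := by
    intro a ha
    simp only [mem_union, mem_filter, ha, true_and]
    have := hcon a
    tauto
  have h5 := (card_le_card h4).trans (card_union_le _ _)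
  have h6 := h5.trans (Nat.add_le_add_right (card_union_le _ _) _)
  rw [Nat.card_Icc] at h6
  omega

/-- Pigeonhole for two simultaneous memberships. -/
lemma exists_pair (hg : Good p S N ν L) {u v : ℕ} {f : ℕ → ℕ} (hf : Set.InjOn f (Icc u v))
    (hv : v ≤ L) (hfL : ∀ a ∈ Icc u v, f a ≤ L) (hlen : u + 2 * (L + 1) ≤ v + 2 * N) :
    ∃ a ∈ Icc u v, a ∈ S ∧ f a ∈ S := by
  have h1 := hg.card_miss (u := u) (v := v) (f := fun a => a) (fun a _ b _ h => h)
    (fun a ha => by have := mem_Icc.mp ha; omega)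
  have h2 := hg.card_miss hf hfL
  by_contra! hcon
  have h4 : Icc u v ⊆ ((Icc u v).filter fun a => ¬ a ∈ S) ∪
      ((Icc u v).filter fun a => ¬ f a ∈ S) := by
    intro a ha
    simp only [mem_union, mem_filter, ha, true_and]
    have := hcon a ha
    tauto
  have h5 := (card_le_card h4).trans (card_union_le _ _)
  rw [Nat.card_Icc] at h5
  omega

/-- The interval `[0, L]` containing `S` has length less than `0.374 p`, with few missing
elements. -/
lemma card_le' (hg : Good p S N ν L) : L + 2 * N ≤ p ∧ N ≤ L + 1 := by
  have h1 : S.filter (· ≤ L) = S := filter_true_of_mem hg.le_L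
  have h2 := hg.card_le
  rw [h1, hg.card] at h2
  have h3 := hg.le_card_add.2
  have h4 := hg.card_miss (u := 0) (v := 0) (f := fun a => a) (fun a _ b _ h => h)
    (fun a ha => by have := mem_Icc.mp ha; omega)
  omega

/-- The sumset `S + S` contains a long interval. -/
lemma mem_sumset (hg : Good p S N ν L) {n : ℕ} (h1 : 2 * (L + 1) ≤ n + 2 * N)
    (h2 : n + 2 ≤ 2 * N) : ∃ a ∈ S, ∃ b ∈ S, a + b = n := by
  obtain ⟨hL, hNL⟩ := hg.card_le'
  obtain ⟨a, ha, haS, hbS⟩ := hg.exists_pair (u := n - L) (v := min n L) (f := fun a => n - a)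
    (fun a ha b hb h => by
      have h1 := mem_Icc.mp ha
      have h2 := mem_Icc.mp hb
      replace h : n - a = n - b := h
      omega)
    (min_le_right _ _) (fun a ha => by have := mem_Icc.mp ha; omega) (by omega)
  have := mem_Icc.mp ha
  exact ⟨a, haS, n - a, hbS, by omega⟩

/-- If `r + s = x t + κ` has no solutions in `S`, then the dilate `x S` is contained in an interval
of length `p + 2 L + 3 - 4 N`, slightly less than `p / 2`, modulo `p`. -/
lemma dilate_subset [Fact p.Prime] (hg : Good p S N ν L) {x κ : ZMod p}
    (hx : ∀ r ∈ S, ∀ s ∈ S, ∀ t ∈ S, ((r : ZMod p) + s) ≠ x * t + κ) :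
    ∃ m : ZMod p, ∀ t ∈ S, ∃ g : ℕ, g + 4 * N < p + 2 * L + 3 ∧ (g : ZMod p) = x * t + m := by
  obtain ⟨hL, hNL⟩ := hg.card_le'
  have hN := hg.hN
  have hp := hg.hp
  refine ⟨κ - ((2 * N - 1 : ℕ) : ZMod p), fun t ht => ?_⟩
  have hc : (((x * t + κ).val : ℕ) : ZMod p) = x * t + κ := ZMod.natCast_zmod_val _
  have hlt : (x * t + κ).val < p := ZMod.val_lt _
  set c := (x * t + κ).val with hc'
  have hout : ¬ (2 * (L + 1) ≤ c + 2 * N ∧ c + 2 ≤ 2 * N) := by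
    rintro ⟨h1, h2⟩
    obtain ⟨a, ha, b, hb, hab⟩ := hg.mem_sumset h1 h2
    refine hx a ha b hb t ht ?_
    rw [← hc, ← hab, Nat.cast_add]
  by_cases h : 2 * N - 1 ≤ c
  · refine ⟨c - (2 * N - 1), by omega, ?_⟩
    rw [Nat.cast_sub h, hc]
    ring
  · refine ⟨c + p - (2 * N - 1), by omega, ?_⟩
    rw [Nat.cast_sub (by omega), Nat.cast_add, hc, ZMod.natCast_self]
    ring

/-- The normalized equation has solutions unless `x` is one of `-1, 0, 1`: by `dilate_subset`, the
multiples `x k` which are differences of elements of `x S` are short, and this forces `x` to be the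
residue of a very small integer. -/
lemma false_of_ne [Fact p.Prime] (hg : Good p S N ν L) {x κ : ZMod p}
    (hx : ∀ r ∈ S, ∀ s ∈ S, ∀ t ∈ S, ((r : ZMod p) + s) ≠ x * t + κ)
    (h0 : x ≠ 0) (h1 : x ≠ 1) (hn1 : x ≠ -1) : False := by
  obtain ⟨hL, hNL⟩ := hg.card_le'
  have hN := hg.hN
  have hN' := hg.hN'
  have hp := hg.hp
  obtain ⟨m, hm⟩ := hg.dilate_subset hx
  obtain ⟨J, hJ⟩ : ∃ J, J + 4 * N = p + 2 * L + 3 := ⟨p + 2 * L + 3 - 4 * N, by omega⟩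
  -- small multiples of `x` are short, by three term progressions
  have short : ∀ k : ℕ, k ≤ p / 11 → ∃ d : ℤ, (d : ZMod p) = x * k ∧ 2 * d < J ∧ -(2 * d) < J := by
    intro k hk
    obtain ⟨a, ha, hb, hc⟩ := hg.exists_triple (v := L - 2 * k) k (by omega) (by omega)
    obtain ⟨g₁, hg₁, e₁⟩ := hm _ ha
    obtain ⟨g₂, hg₂, e₂⟩ := hm _ hb
    obtain ⟨g₃, hg₃, e₃⟩ := hm _ hc
    have heq : (g₁ + g₃ : ℤ) = 2 * g₂ := by
      refine eq_of_cast_eq (p := p) ?_ (by omega) (by omega)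
      push_cast
      rw [e₁, e₂, e₃]
      push_cast
      ring
    refine ⟨(g₂ : ℤ) - g₁, ?_, by omega, by omega⟩
    push_cast
    rw [e₁, e₂]
    push_cast
    ring
  obtain ⟨y, hy, hyJ, hyJ'⟩ := short 1 (by omega)
  rw [Nat.cast_one, mul_one] at hy
  have lin : ∀ k : ℕ, k ≤ p / 11 → 2 * (y * k) < J ∧ -(2 * (y * k)) < J := by
    intro k
    induction k with
    | zero => intro _; constructor <;> push_cast <;> omega
    | succ k ih =>
      intro hk
      obtain ⟨i₁, i₂⟩ := ih (by omega)
      obtain ⟨d, hd, hd₁, hd₂⟩ := short (k + 1) hk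
      have heq : d = y * k + y := by
        refine eq_of_cast_eq (p := p) ?_ (by omega) (by omega)
        rw [hd]
        push_cast
        rw [hy]
        ring
      have hyk : y * ((k + 1 : ℕ) : ℤ) = y * k + y := by push_cast; ring
      rw [hyk, ← heq]
      exact ⟨hd₁, hd₂⟩
  obtain ⟨l₁, l₂⟩ := lin (p / 11) le_rfl
  have hy3 : y ≤ 2 := by
    by_contra! hcon
    have : 3 * ((p / 11 : ℕ) : ℤ) ≤ y * ((p / 11 : ℕ) : ℤ) :=
      mul_le_mul_of_nonneg_right (by omega) (by omega)
    omega
  have hy3' : -2 ≤ y := by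
    by_contra! hcon
    have : 3 * ((p / 11 : ℕ) : ℤ) ≤ -y * ((p / 11 : ℕ) : ℤ) :=
      mul_le_mul_of_nonneg_right (by omega) (by omega)
    rw [neg_mul] at this
    omega
  -- the multiple by `p / 4` rules out `±2`
  obtain ⟨q, hq⟩ : ∃ q, q = p / 4 := ⟨_, rfl⟩
  obtain ⟨a, -, ha, hb⟩ := hg.exists_pair (u := 0) (v := L - q) (f := fun a => a + q)
    (fun a _ b _ h => Nat.add_right_cancel h) (by omega)
    (fun a ha => by have := mem_Icc.mp ha; omega) (by omega)
  obtain ⟨g₁, hg₁, e₁⟩ := hm _ ha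
  obtain ⟨g₂, hg₂, e₂⟩ := hm _ hb
  have he : (((g₂ : ℤ) - g₁ : ℤ) : ZMod p) = ((y * (q : ℤ) : ℤ) : ZMod p) := by
    push_cast
    rw [e₁, e₂, hy]
    push_cast
    ring
  have hcases : y = -2 ∨ y = -1 ∨ y = 0 ∨ y = 1 ∨ y = 2 := by omega
  rcases hcases with rfl | rfl | rfl | rfl | rfl
  · have := eq_of_cast_eq he (by omega) (by omega)
    omega
  · exact hn1 (by rw [← hy]; norm_num)
  · exact h0 (by rw [← hy]; norm_num)
  · exact h1 (by rw [← hy]; norm_num)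
  · have := eq_of_cast_eq he (by omega) (by omega)
    omega

end Good

end SumRatio

theorem stmt5 :
    ∃ p₀ : ℕ, ∀ p : ℕ, p.Prime → p₀ ≤ p →
      ∀ A : Finset (ZMod p), (0 : ZMod p) ∉ A → (0.313 : ℝ) * p ≤ A.card →
        ∀ x : ZMod p, x ≠ -1 → x ≠ 0 → x ≠ 1 →
          ∃ a₁ ∈ A, ∃ a₂ ∈ A, ∃ a₃ ∈ A, x = (a₁ + a₂) * a₃⁻¹ := by
  refine ⟨1000000, fun p hpp hp A h0 hA x hn1 hx0 hx1 => ?_⟩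
  have : Fact p.Prime := ⟨hpp⟩
  by_contra! hcon
  have hA' : 313 * p ≤ 1000 * A.card := by
    have h : (313 * p : ℝ) ≤ 1000 * A.card := by linarith
    exact_mod_cast h
  -- discard elements until the density is as close to `0.313` as possible
  obtain ⟨B, hBA, hB⟩ := Finset.exists_subset_card_eq (s := A) (n := (313 * p + 999) / 1000) (by omega)
  obtain ⟨S, ν, L, hg, κ, hκ⟩ := SumRatio.exists_good (A := B) hp hx0 (by omega) (by omega)
    fun a ha b hb c hc h => by
      have hc0 : c ≠ 0 := fun hc0 => h0 (hc0 ▸ hBA hc)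
      refine hcon a (hBA ha) b (hBA hb) c (hBA hc) ?_
      rw [h, mul_assoc, mul_inv_cancel₀ hc0, mul_one]
  exact hg.false_of_ne hκ hx0 hx1 hn1
end

section
/- For every integer m ≥ 7 and every positive integer n such that p = 4m²n + 1 is prime, there exists an m-sum-free subset A ⊆ ℤ/pℤ with |A| ≥ (p − 1)/8. -/
/-!
Write `p = 4N + 1` and let `I ⊆ ZMod p` be the interval `{0, …, N - 1}`, so that `I + I` lies in
the interval `K = {0, …, 2N - 2}`. For every `s`, the set
`A_s = {s + i : i ∈ I, m (s + i) - 2 s ∉ K}` contains no solution of `x + y = m z`, because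
`x + y - 2 s ∈ K` for `x, y ∈ A_s`. Since `m - 2` is invertible modulo `p`, for fixed `i` the value
`m (s + i) - 2 s = (m - 2) s + m i` runs through `ZMod p` exactly once as `s` varies, so the average
of `|A_s|` over `s` is `N (p - |K|) / p = N (2N + 2) / (4N + 1) > N / 2 = (p - 1) / 8`.
-/

/-- Averaging step: a translate parameter `s` for which at least half of the elements of `I` satisfy
`m (s + i) - 2 s ∉ K`, provided `K` covers at most half of `ZMod p`. -/
theorem exists_good_shift (m p : ℕ) [Fact p.Prime] (hm : (m : ZMod p) - 2 ≠ 0)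
    (I K : Finset (ZMod p)) (hK : 2 * K.card ≤ p) :
    ∃ s : ZMod p, I.card ≤ 2 * (I.filter fun i => (m : ZMod p) * (s + i) - 2 * s ∉ K).card := by
  by_contra! h
  have hcount : ∀ i : ZMod p,
      p - K.card = (Finset.univ.filter fun s : ZMod p => (m : ZMod p) * (s + i) - 2 * s ∉ K).card := by
    intro i
    have hcompl : Kᶜ.card = p - K.card := by rw [Finset.card_compl, ZMod.card]
    rw [← hcompl]
    symm
    apply Finset.card_bij (fun s _ => (m : ZMod p) * (s + i) - 2 * s)
    · intro s hs
      simpa using hs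
    · intro s _ t _ hst
      apply mul_left_cancel₀ hm
      linear_combination hst
    · intro b hb
      refine ⟨(b - m * i) / (m - 2), ?_, ?_⟩
      · have : (m : ZMod p) * ((b - m * i) / (m - 2) + i) - 2 * ((b - m * i) / (m - 2)) = b := by
          field_simp
          ring
        simpa [this] using hb
      · field_simp
        ring
  have hdouble : ∑ s : ZMod p, (I.filter fun i => (m : ZMod p) * (s + i) - 2 * s ∉ K).card
      = I.card * (p - K.card) := by
    simp_rw [Finset.card_filter]
    rw [Finset.sum_comm]
    simp_rw [← Finset.card_filter, ← hcount]
    simp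
  have hlt : ∑ s : ZMod p, 2 * (I.filter fun i => (m : ZMod p) * (s + i) - 2 * s ∉ K).card
      < ∑ _s : ZMod p, I.card :=
    Finset.sum_lt_sum_of_nonempty Finset.univ_nonempty fun s _ => h s
  rw [← Finset.mul_sum, hdouble] at hlt
  simp only [Finset.sum_const, Finset.card_univ, ZMod.card, smul_eq_mul] at hlt
  have h2 : p ≤ 2 * (p - K.card) := by omega
  nlinarith [Nat.mul_le_mul_left I.card h2]

theorem stmt7 (m n p : ℕ) (hm : 7 ≤ m) (hn : 1 ≤ n)
    (hpdef : p = 4 * m ^ 2 * n + 1) (hp : p.Prime) :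
    ∃ A : Finset (ZMod p),
      (∀ x ∈ A, ∀ y ∈ A, ∀ z ∈ A, x + y ≠ m • z) ∧
      ((p : ℝ) - 1) / 8 ≤ A.card := by
  haveI : Fact p.Prime := ⟨hp⟩
  obtain ⟨N, hN⟩ : ∃ N, N = m ^ 2 * n := ⟨_, rfl⟩
  have hpN : p = 4 * N + 1 := by rw [hpdef, hN]; ring
  have hmN : m ≤ N := by
    rw [hN]
    nlinarith [Nat.mul_le_mul_left (m ^ 2) hn]
  have hm2 : (m : ZMod p) - 2 ≠ 0 := by
    intro h0
    have h1 : ((m - 2 : ℕ) : ZMod p) = 0 := by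
      rw [Nat.cast_sub (by omega)]
      exact_mod_cast h0
    rw [ZMod.natCast_eq_zero_iff] at h1
    have := Nat.le_of_dvd (by omega) h1
    omega
  set I : Finset (ZMod p) := (Finset.range N).image (fun k : ℕ => (k : ZMod p)) with hI
  set K : Finset (ZMod p) := (Finset.range (2 * N - 1)).image (fun k : ℕ => (k : ZMod p)) with hKdef
  have hIcard : I.card = N := by
    rw [hI, Finset.card_image_of_injOn, Finset.card_range]
    intro a ha b hb hab
    simp only [Finset.coe_range, Set.mem_Iio] at ha hb
    have h1 := (ZMod.natCast_eq_natCast_iff' a b p).1 hab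
    rwa [Nat.mod_eq_of_lt (by omega), Nat.mod_eq_of_lt (by omega)] at h1
  have hKcard : K.card ≤ 2 * N - 1 := by
    simpa using Finset.card_image_le (s := Finset.range (2 * N - 1)) (f := fun k : ℕ => (k : ZMod p))
  have hIK : ∀ a ∈ I, ∀ b ∈ I, a + b ∈ K := by
    intro a ha b hb
    obtain ⟨k, hk, rfl⟩ := Finset.mem_image.1 ha
    obtain ⟨l, hl, rfl⟩ := Finset.mem_image.1 hb
    rw [Finset.mem_range] at hk hl
    exact Finset.mem_image.2 ⟨k + l, Finset.mem_range.2 (by omega), by push_cast; rfl⟩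
  obtain ⟨s, hs⟩ := exists_good_shift m p hm2 I K (by omega)
  refine ⟨(I.filter fun i => (m : ZMod p) * (s + i) - 2 * s ∉ K).image (fun i => s + i), ?_, ?_⟩
  · intro x hx y hy z hz hxyz
    obtain ⟨a, ha, rfl⟩ := Finset.mem_image.1 hx
    obtain ⟨b, hb, rfl⟩ := Finset.mem_image.1 hy
    obtain ⟨c, hc, rfl⟩ := Finset.mem_image.1 hz
    rw [nsmul_eq_mul] at hxyz
    apply (Finset.mem_filter.1 hc).2
    have : (m : ZMod p) * (s + c) - 2 * s = a + b := by linear_combination -hxyz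
    rw [this]
    exact hIK a (Finset.mem_filter.1 ha).1 b (Finset.mem_filter.1 hb).1
  · rw [Finset.card_image_of_injective _ (add_right_injective s)]
    rw [hIcard] at hs
    have h1 : (N : ℝ) ≤ 2 *
        ((I.filter fun i => (m : ZMod p) * (s + i) - 2 * s ∉ K).card : ℝ) := by
      exact_mod_cast hs
    have h2 : (p : ℝ) = 4 * N + 1 := by exact_mod_cast hpN
    linarith
end

section
/- Let m ≥ 3 be an integer, let n be a positive integer such that p = 4m²n + 1 is prime, and let λ, μ be integers with 3 ≤ λ ≤ m, 0 ≤ μ ≤ m−1, and 2μ + ⌈λ/2⌉ ≤ m. Let A be the image in ℤ/pℤ of the set of integers {x : 4mn + 1 ≤ x ≤ 2λmn and (x mod m) ≤ μ}. Then A is m-sum-free and |A| = 2n(μ+1)(λ−2). -/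
/-!
Put `p = 4m²n + 1`, so that `p ≡ 1 (mod m)`. All representatives lie below `p`, so reduction modulo
`p` is injective on them. The interval has `2mn(λ - 2)` consecutive elements, which
is a multiple of `m`, and each block of `m` consecutive integers contains `μ + 1` elements with
residue at most `μ`; this gives the cardinality (`count_residue_le`, `card_residue_le`).

For sum-freeness (`nat_sum_ne`), a solution has `x + y < p < m z`, hence `m z = x + y + p k` with
`k ≥ 1`, and `m z ≤ 2λm²n` forces `2k < λ`. Modulo `m` this says that `m` divides
`(x mod m) + (y mod m) + k`, a positive integer which is at most `2μ + ⌈λ/2⌉ - 1 < m`: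
a contradiction.
-/

lemma count_residue_le (m mu d : ℕ) (hmu : mu < m) :
    Nat.count (fun x => x % m ≤ mu) (m * d) = d * (mu + 1) := by
  have h1 : Nat.count (fun x => x % m ≤ mu) m = mu + 1 := by
    rw [Nat.count_eq_card_filter_range]
    have : (Finset.range m).filter (fun x => x % m ≤ mu) = Finset.range (mu + 1) := by
      ext x
      simp only [Finset.mem_filter, Finset.mem_range]
      constructor
      · rintro ⟨h, h'⟩
        rw [Nat.mod_eq_of_lt h] at h'
        omega
      · intro h
        have hx : x < m := by omega
        rw [Nat.mod_eq_of_lt hx]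
        omega
    rw [this, Finset.card_range]
  induction d with
  | zero => simp
  | succ d ih =>
    rw [Nat.mul_succ, Nat.count_add, ih]
    simp only [Nat.mul_add_mod]
    rw [h1]
    ring

lemma card_residue_le (m mu d a : ℕ) (hmu : mu < m) :
    ((Finset.Ico a (a + m * d)).filter (fun x => x % m ≤ mu)).card = d * (mu + 1) := by
  rw [Nat.filter_Ico_card_eq_of_periodic a (m * d) (fun x => x % m ≤ mu), count_residue_le _ _ _ hmu]
  intro x
  simp

/-- The sum-freeness in terms of natural representatives: `m z = x + y + p k` has no solution. -/
lemma nat_sum_ne (m n lam mu x y z k : ℕ) (hm : 3 ≤ m) (hn : 1 ≤ n)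
    (hlamm : lam ≤ m) (hconstraint : 2 * mu + (lam + 1) / 2 ≤ m)
    (hx : x ≤ 2 * lam * m * n) (hy : y ≤ 2 * lam * m * n)
    (hxm : x % m ≤ mu) (hym : y % m ≤ mu)
    (hz : 4 * m * n + 1 ≤ z) (hz' : z ≤ 2 * lam * m * n)
    (h : m * z = x + y + (4 * m ^ 2 * n + 1) * k) : False := by
  have hmn : 0 < m ^ 2 * n := by positivity
  have hk : 1 ≤ k := by
    by_contra hk
    obtain rfl : k = 0 := by omega
    have h1 : lam * (m * n) ≤ m * (m * n) := Nat.mul_le_mul_right _ hlamm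
    have h2 : m * (4 * m * n + 1) ≤ m * z := Nat.mul_le_mul_left _ hz
    nlinarith
  have hk2 : 2 * k < lam := by
    by_contra! hk2
    have h1 : m * z ≤ m * (2 * lam * m * n) := Nat.mul_le_mul_left _ hz'
    have h2 : lam * (m ^ 2 * n) ≤ 2 * k * (m ^ 2 * n) := Nat.mul_le_mul_right _ hk2
    nlinarith
  have hdvd : m ∣ x % m + y % m + k := by
    have hsum : m ∣ x + y + k := by
      refine (Nat.dvd_add_right (Dvd.intro (4 * m * n * k) rfl)).1 ⟨z, ?_⟩
      rw [h]
      ring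
    rw [← Nat.modEq_zero_iff_dvd] at hsum ⊢
    exact (((Nat.mod_modEq x m).add (Nat.mod_modEq y m)).add_right k).trans hsum
  have := Nat.le_of_dvd (by omega) hdvd
  omega

theorem stmt8 (m n p : ℕ) (hm : 3 ≤ m) (hn : 1 ≤ n)
    (hpdef : p = 4 * m ^ 2 * n + 1) (hp : p.Prime)
    (lam mu : ℕ) (hlam3 : 3 ≤ lam) (hlamm : lam ≤ m) (hmu : mu ≤ m - 1)
    (hconstraint : 2 * mu + (lam + 1) / 2 ≤ m)
    (A : Finset (ZMod p))
    (hAdef : A = ((Finset.Icc (4 * m * n + 1) (2 * lam * m * n)).filter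
      (fun x => x % m ≤ mu)).image (fun x : ℕ => (x : ZMod p))) :
    (∀ x ∈ A, ∀ y ∈ A, ∀ z ∈ A, x + y ≠ m • z) ∧
    A.card = 2 * n * (mu + 1) * (lam - 2) := by
  subst hAdef
  have hlam : lam * (m * n) ≤ m * (m * n) := Nat.mul_le_mul_right _ hlamm
  have hbound : 2 * (2 * lam * m * n) < p := by rw [hpdef]; nlinarith
  constructor
  · simp only [Finset.mem_image, Finset.mem_filter, Finset.mem_Icc]
    rintro _ ⟨x, ⟨⟨-, hx⟩, hxm⟩, rfl⟩ _ ⟨y, ⟨⟨-, hy⟩, hym⟩, rfl⟩ _ ⟨z, ⟨⟨hz, hz'⟩, -⟩, rfl⟩ h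
    have hcast : ((x + y : ℕ) : ZMod p) = ((m * z : ℕ) : ZMod p) := by
      push_cast
      rw [h, nsmul_eq_mul]
    rw [ZMod.natCast_eq_natCast_iff] at hcast
    have hle : x + y ≤ m * z := by
      have h2 : m * (4 * m * n + 1) ≤ m * z := Nat.mul_le_mul_left _ hz
      nlinarith
    obtain ⟨k, hk⟩ := (Nat.modEq_iff_dvd' hle).1 hcast
    refine nat_sum_ne m n lam mu x y z k hm hn hlamm hconstraint hx hy hxm hym hz hz' ?_
    rw [← hpdef, ← hk]
    omega
  · rw [Finset.card_image_of_injOn]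
    · obtain ⟨l, rfl⟩ : ∃ l, lam = l + 2 := ⟨lam - 2, by omega⟩
      have hIcc : Finset.Icc (4 * m * n + 1) (2 * (l + 2) * m * n)
          = Finset.Ico (4 * m * n + 1) (4 * m * n + 1 + m * (2 * n * l)) := by
        have : 2 * (l + 2) * m * n = 4 * m * n + m * (2 * n * l) := by ring
        ext x
        simp only [Finset.mem_Icc, Finset.mem_Ico]
        omega
      rw [hIcc, card_residue_le _ _ _ _ (by omega), Nat.add_sub_cancel]
      ring
    · intro x hx y hy hxy
      simp only [Finset.coe_filter, Finset.mem_Icc, Set.mem_ofPred_eq] at hx hy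
      have hxy' : (x : ZMod p) = (y : ZMod p) := hxy
      rw [ZMod.natCast_eq_natCast_iff] at hxy'
      exact Nat.ModEq.eq_of_lt_of_lt hxy' (by omega) (by omega)
end

section
/- Let m ≥ 7 be an integer with m ≡ 3 (mod 4), and let n be a positive integer such that p = 4m²n + 1 is prime. Then there exists an m-sum-free subset A′ ⊆ ℤ/pℤ with |A′| = n(m² + m − 2)/2; equivalently, |A′|/(p−1) = (m² + m − 2)/(8m²). -/
/-!
Write `m = 4k - 1`. Take `k` intervals of length `2mn`, consecutive ones starting `4mn` apart, the
first one starting at `a`. Since `m * 4mn = p - 1 ≡ -1 (mod p)`, multiplication by `m` stacks these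
intervals almost exactly on top of each other, so `m • A` lies in an interval of about `2m²n`
residues, while `A + A` lies in an interval of about `2m²n - 2mn` residues. As `m - 2` is invertible
modulo `p`, the translation `a` can be chosen so that `(m - 2) a = 2m²n`, which makes the two
intervals disjoint. The set so obtained has `2mnk = n m (m + 1) / 2` elements, which exceeds the
required size by `n`, and every subset of an `m`-sum-free set is `m`-sum-free.
-/

theorem stmt9 (m n p : ℕ) (hm : 7 ≤ m) (hm4 : m % 4 = 3) (hn : 1 ≤ n)
    (hpdef : p = 4 * m ^ 2 * n + 1) (hp : p.Prime) :
    ∃ A' : Finset (ZMod p),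
      (∀ x ∈ A', ∀ y ∈ A', ∀ z ∈ A', x + y ≠ m • z) ∧
      2 * A'.card = n * (m ^ 2 + m - 2) := by
  have : Fact p.Prime := ⟨hp⟩
  obtain ⟨k, hk⟩ : ∃ k, m + 1 = 4 * k := ⟨(m + 1) / 4, by omega⟩
  have hmn : m ≤ m * n := Nat.le_mul_of_pos_right m hn
  have hmmn : m * n * 1 ≤ m * n * m := Nat.mul_le_mul_left _ (by omega)
  have hp' : p = 4 * (m * n * m) + 1 := by rw [hpdef]; ring
  have hkm : 4 * (m * n * k) = m * n * m + m * n := by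
    calc 4 * (m * n * k) = m * n * (4 * k) := by ring
      _ = m * n * m + m * n := by rw [← hk]; ring
  -- The largest offset is `4mn(k - 1) + 2mn - 1 = m²n - mn - 1`.
  have hoff : ∀ j i : ℕ, j < k → i < 2 * (m * n) →
      4 * (m * n) * j + i + m * n + 1 ≤ m * n * m := by
    intro j i hj hi
    have : m * n * (j + 1) ≤ m * n * k := Nat.mul_le_mul_left _ hj
    rw [mul_add] at this
    have h2 : 4 * (m * n) * j = 4 * (m * n * j) := by ring
    omega
  obtain ⟨a, ha⟩ : ∃ a : ZMod p, ((m : ZMod p) - 2) * a = 2 * (m : ZMod p) ^ 2 * n := by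
    have hne : (m : ZMod p) - 2 ≠ 0 := by
      intro h
      have h1 : ((m - 2 : ℕ) : ZMod p) = 0 := by
        rw [Nat.cast_sub (by omega)]; exact_mod_cast h
      rw [ZMod.natCast_eq_zero_iff] at h1
      have := Nat.le_of_dvd (by omega) h1
      omega
    exact ⟨((m : ZMod p) - 2)⁻¹ * (2 * (m : ZMod p) ^ 2 * n), by field_simp⟩
  have hp0 : (4 : ZMod p) * (m : ZMod p) ^ 2 * n = -1 := by
    have h : ((4 * m ^ 2 * n + 1 : ℕ) : ZMod p) = 0 := by
      rw [← hpdef]; exact ZMod.natCast_self p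
    push_cast at h
    linear_combination h
  let f : ℕ × ℕ → ZMod p := fun q => a + ((4 * (m * n) * q.1 + q.2 : ℕ) : ZMod p)
  let S : Finset (ℕ × ℕ) := Finset.range k ×ˢ Finset.range (2 * (m * n))
  have hinj : Set.InjOn f S := by
    rintro ⟨j, i⟩ h1 ⟨j', i'⟩ h2 h
    simp only [S, Finset.coe_product, Finset.coe_range, Set.mem_prod, Set.mem_Iio] at h1 h2
    have h3 := add_left_cancel h
    simp only at h3
    rw [ZMod.natCast_eq_natCast_iff] at h3
    have b1 := hoff j i h1.1 h1.2
    have b2 := hoff j' i' h2.1 h2.2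
    have h4 := Nat.ModEq.eq_of_lt_of_lt h3 (by omega) (by omega)
    have hj : j = j' := by
      have := congrArg (· / (4 * (m * n))) h4
      rwa [Nat.mul_add_div (by omega), Nat.mul_add_div (by omega),
        Nat.div_eq_of_lt (by omega), Nat.div_eq_of_lt (by omega)] at this
    subst hj
    simp only [Prod.mk.injEq, true_and]
    omega
  have hcard : (S.image f).card = k * (2 * (m * n)) := by
    rw [Finset.card_image_of_injOn hinj]; simp [S]
  have hkk : 2 * (k * (2 * (m * n))) = n * (m ^ 2 + m) := by
    calc 2 * (k * (2 * (m * n))) = (4 * k) * (m * n) := by ring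
      _ = n * (m ^ 2 + m) := by rw [← hk]; ring
  have hsub : n * (m ^ 2 + m - 2) = n * (m ^ 2 + m) - 2 * n := by
    rw [Nat.mul_sub, mul_comm n 2]
  obtain ⟨A, hAS, hA⟩ := Finset.exists_subset_card_eq
    (s := S.image f) (n := k * (2 * (m * n)) - n) (by omega)
  refine ⟨A, ?_, by omega⟩
  intro x hx y hy z hz hxyz
  obtain ⟨⟨j₁, i₁⟩, h1, rfl⟩ := Finset.mem_image.1 (hAS hx)
  obtain ⟨⟨j₂, i₂⟩, h2, rfl⟩ := Finset.mem_image.1 (hAS hy)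
  obtain ⟨⟨j, i⟩, h3, rfl⟩ := Finset.mem_image.1 (hAS hz)
  simp only [S, Finset.mem_product, Finset.mem_range] at h1 h2 h3
  have b1 := hoff j₁ i₁ h1.1 h1.2
  have b2 := hoff j₂ i₂ h2.1 h2.2
  set u := 4 * (m * n) * j₁ + i₁ with hu
  set v := 4 * (m * n) * j₂ + i₂ with hv
  have hmi : m * (i + 1) ≤ m * (2 * (m * n)) := Nat.mul_le_mul_left _ h3.2
  have hmi' : m * (2 * (m * n)) = 2 * (m * n * m) := by ring
  rw [mul_add, hmi'] at hmi
  -- After `2a` is cancelled, the equation `x + y = m • z` reads `u + v + j ≡ 2m²n + mi (mod p)`.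
  have key : ((u + v + j : ℕ) : ZMod p) = ((2 * (m * n * m) + m * i : ℕ) : ZMod p) := by
    have h : a + (u : ZMod p) + (a + (v : ZMod p))
        = m • (a + ((4 * (m * n) * j + i : ℕ) : ZMod p)) := hxyz
    rw [nsmul_eq_mul] at h
    push_cast at h ⊢
    linear_combination h + ha + (j : ZMod p) * hp0
  rw [ZMod.natCast_eq_natCast_iff] at key
  have := Nat.ModEq.eq_of_lt_of_lt key (by omega) (by omega)
  omega
end

section
/- For every integer m ≥ 7, there exist infinitely many primes p such that ℤ/pℤ contains an m-sum-free subset A with |A| ≥ (p − 1)/8. -/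
/-!
Let `p` be a prime larger than `m` and let `S = {0, …, a - 1} ⊆ ℤ/pℤ`, so that
`S + S ⊆ B = {0, …, 2a - 2}`. For each `u`, the set
`A_u = {u + s : s ∈ S, m (u + s) - 2 u ∉ B}` is `m`-sum-free: if `x = u + s` and `y = u + t` lie in
`A_u`, then `x + y - 2 u = s + t ∈ B`, whereas `m z - 2 u ∉ B` for every `z ∈ A_u`.

Since `m - 2` is invertible modulo `p`, for each fixed `s` the element `m (u + s) - 2 u` runs over
`ℤ/pℤ` exactly once as `u` does. Hence the average of `|A_u|` over `u` is `a (p - 2a + 1) / p`, and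
some `A_u` is at least this large. With `a = ⌊(p + 1) / 4⌋` this is at least `(p - 1) / 8`.
-/

/-- Averaging over the translates `u`: with `S` and `B` arbitrary, some `u` leaves at least the
average number of `s ∈ S` with `m (u + s) - 2 u ∉ B`. -/
lemma exists_translate {p : ℕ} [Fact p.Prime] (c : ZMod p) (hc : c - 2 ≠ 0)
    (S B : Finset (ZMod p)) :
    ∃ u : ZMod p, S.card * (p - B.card) ≤
      p * (S.filter fun s => c * (u + s) - 2 * u ∉ B).card := by
  have hsum : ∑ u : ZMod p, (S.filter fun s => c * (u + s) - 2 * u ∉ B).card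
      = S.card * (p - B.card) := by
    simp_rw [Finset.card_filter]
    rw [Finset.sum_comm]
    rw [Finset.sum_const_nat (m := p - B.card)]
    intro s _
    rw [← Finset.card_filter]
    have hinj : Function.Injective fun u : ZMod p => c * (u + s) - 2 * u := by
      intro u v huv
      have h : (c - 2) * (u - v) = 0 := by
        simp only at huv
        linear_combination huv
      exact sub_eq_zero.mp ((mul_eq_zero.mp h).resolve_left hc)
    have hbij := Finite.injective_iff_bijective.mp hinj
    rw [Finset.card_bijective (t := Bᶜ) _ hbij (by simp), Finset.card_compl, ZMod.card]
  by_contra! hlt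
  have h := Finset.sum_lt_sum_of_nonempty (s := (Finset.univ : Finset (ZMod p)))
    Finset.univ_nonempty (fun u _ => hlt u)
  rw [← Finset.mul_sum, hsum, Finset.sum_const, Finset.card_univ, ZMod.card, smul_eq_mul] at h
  exact lt_irrefl _ h

lemma exists_sumFree (m p : ℕ) [Fact p.Prime] (hm : 2 < m) (hmp : m < p) :
    ∃ A : Finset (ZMod p),
      (∀ x ∈ A, ∀ y ∈ A, ∀ z ∈ A, x + y ≠ m • z) ∧ ((p : ℝ) - 1) / 8 ≤ A.card := by
  set a := (p + 1) / 4 with ha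
  let S : Finset (ZMod p) := (Finset.range a).image Nat.cast
  let B : Finset (ZMod p) := (Finset.range (2 * a - 1)).image Nat.cast
  have hc : (m : ZMod p) - 2 ≠ 0 := by
    intro h
    have h2 : ((m - 2 : ℕ) : ZMod p) = 0 := by
      rw [Nat.cast_sub hm.le]
      exact_mod_cast h
    rw [ZMod.natCast_eq_zero_iff] at h2
    have := Nat.le_of_dvd (by omega) h2
    omega
  have hS : S.card = a := by
    rw [Finset.card_image_of_injOn, Finset.card_range]
    intro i hi j hj hij
    simp only [Finset.coe_range, Set.mem_Iio] at hi hj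
    exact Nat.ModEq.eq_of_lt_of_lt ((ZMod.natCast_eq_natCast_iff i j p).mp hij)
      (by omega) (by omega)
  have hB : B.card ≤ 2 * a - 1 := by
    simpa using Finset.card_image_le (s := Finset.range (2 * a - 1)) (f := (Nat.cast : ℕ → ZMod p))
  have hSB : ∀ s ∈ S, ∀ t ∈ S, s + t ∈ B := by
    intro s hs t ht
    obtain ⟨i, hi, rfl⟩ := Finset.mem_image.mp hs
    obtain ⟨j, hj, rfl⟩ := Finset.mem_image.mp ht
    rw [Finset.mem_range] at hi hj
    exact Finset.mem_image.mpr ⟨i + j, Finset.mem_range.mpr (by omega), by push_cast; rfl⟩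
  obtain ⟨u, hu⟩ := exists_translate (m : ZMod p) hc S B
  refine ⟨(S.filter fun s => (m : ZMod p) * (u + s) - 2 * u ∉ B).image (u + ·), ?_, ?_⟩
  · intro x hx y hy z hz hxyz
    obtain ⟨s, hs, rfl⟩ := Finset.mem_image.mp hx
    obtain ⟨t, ht, rfl⟩ := Finset.mem_image.mp hy
    obtain ⟨r, hr, rfl⟩ := Finset.mem_image.mp hz
    rw [Finset.mem_filter] at hs ht hr
    apply hr.2
    rw [nsmul_eq_mul] at hxyz
    have : (m : ZMod p) * (u + r) - 2 * u = s + t := by linear_combination -hxyz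
    rw [this]
    exact hSB s hs.1 t ht.1
  · rw [Finset.card_image_of_injective _ (add_right_injective u)]
    set N := (S.filter fun s => (m : ZMod p) * (u + s) - 2 * u ∉ B).card
    rw [hS] at hu
    have h1 : a * (p + 1 - 2 * a) ≤ p * N :=
      (Nat.mul_le_mul_left a (by omega)).trans hu
    have hodd : p % 2 = 1 :=
      ((Fact.out : p.Prime).eq_two_or_odd).resolve_left (by omega)
    have hp0 : (0 : ℝ) < p := by exact_mod_cast (by omega : 0 < p)
    have h2 : (p : ℝ) * (p - 1) ≤ 8 * (p * N) := by
      -- `8 a (p + 1 - 2a)` is `16 k (k + 1)` for `p = 4k + 1` and `16 (k + 1)²` for `p = 4k + 3`.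
      obtain ⟨k, hk | hk⟩ : ∃ k, p = 4 * k + 1 ∨ p = 4 * k + 3 := ⟨p / 4, by omega⟩
      · have hak : a = k := by omega
        rw [hak, show p + 1 - 2 * k = 2 * k + 2 by omega] at h1
        have h1' : (k : ℝ) * (2 * k + 2) ≤ p * N := by exact_mod_cast h1
        have hk' : (p : ℝ) = 4 * k + 1 := by exact_mod_cast hk
        have : (p : ℝ) * (p - 1) = 16 * k * k + 4 * k := by rw [hk']; ring
        have hk0 : (0 : ℝ) ≤ k := k.cast_nonneg
        linarith
      · have hak : a = k + 1 := by omega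
        rw [hak, show p + 1 - 2 * (k + 1) = 2 * k + 2 by omega] at h1
        have h1' : ((k : ℝ) + 1) * (2 * k + 2) ≤ p * N := by exact_mod_cast h1
        have hk' : (p : ℝ) = 4 * k + 3 := by exact_mod_cast hk
        have : (p : ℝ) * (p - 1) = 16 * k * k + 20 * k + 6 := by rw [hk']; ring
        have hk0 : (0 : ℝ) ≤ k := k.cast_nonneg
        linarith
    have h3 : (p : ℝ) * (p - 1) ≤ p * (8 * N) := by linarith
    have := le_of_mul_le_mul_left h3 hp0
    linarith

theorem stmt10 (m : ℕ) (hm : 7 ≤ m) :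
    {p : ℕ | p.Prime ∧ ∃ A : Finset (ZMod p),
      (∀ x ∈ A, ∀ y ∈ A, ∀ z ∈ A, x + y ≠ m • z) ∧
      ((p : ℝ) - 1) / 8 ≤ A.card}.Infinite := by
  refine Set.infinite_of_forall_exists_gt fun n => ?_
  obtain ⟨p, hp, hprime⟩ := Nat.exists_infinite_primes (n + m + 1)
  haveI : Fact p.Prime := ⟨hprime⟩
  exact ⟨p, ⟨hprime, exists_sumFree m p (by omega) (by omega)⟩, by omega⟩
end

section
/- Let p ≥ 80 be a prime, let α be a real number with 0 < α ≤ 1/5, let d be an integer with 2 ≤ d ≤ p−2, and let N be a positive integer. Let I and J be arithmetic progressions in ℤ/pℤ with a common nonzero difference satisfying |I| = 2N − 1, |J| > (1+α)N − 3, and |I ∩ (d·J)| ≤ αN − 2. Then N < (p+3)/(3+α). -/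
/-!
Dividing by the common difference and translating, one may take `I = {0, …, n - 1}` with
`n = 2N - 1` and `d·J = {u, u + d, …, u + (k - 1)d}` with `k = |J|`; reversing the second
progression replaces `d` by `e = min(d, p - d)`. Let `m = p - n` be the size of the complement `C`
of `I` and `s = |I ∩ d·J|`. All but `s` terms of the progression lie in `C`, so for every `j` at
least `k - j - 2s` indices `i` have both the `i`-th and the `(i + j)`-th term in `C`. On the other
hand `C` is an interval, so it meets its translate by `j * e` in at most `m - j * e` points as long
as `j * e ≤ n`. Hence `k ≤ j + 2s + (m - j * e)⁺` (`shift_bound`).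

If `(3 + α)N ≥ p + 3`, then `m ≤ (1 + α)N - 2`, so that `m ≤ k`. Taking `j = 1` gives
`e ≤ 2s + 1`, which is small; then `j = ⌈m / e⌉` is admissible and gives
`k ≤ j + 2s ≤ (m + 1) / 2 + 2s`, hence `k ≤ 4s + 1`, which contradicts `k > (1 + α)N - 3` and
`s ≤ αN - 2` (`core`).
-/

open Finset

/-- `P` is an arithmetic progression in `ZMod p` with difference `g`. -/
def IsAPWith {p : ℕ} (g : ZMod p) (P : Finset (ZMod p)) : Prop :=
  ∃ a : ZMod p, ∃ k : ℕ, 1 ≤ k ∧ P = (Finset.range k).image (fun i : ℕ => a + (i : ZMod p) * g)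

/-- The complement of `{0, …, n - 1}` meets its translate by `t ≤ n` in at most `p - n - t`
points. -/
lemma card_inter_shift (p : ℕ) [NeZero p] (n t : ℕ) (ht : t ≤ n) :
    (univ.filter (fun y : ZMod p => n ≤ y.val ∧ n ≤ (y + (t : ZMod p)).val)).card ≤ p - n - t := by
  have h : ∀ y ∈ univ.filter (fun y : ZMod p => n ≤ y.val ∧ n ≤ (y + (t : ZMod p)).val),
      y.val ∈ Finset.Ico n (p - t) := by
    intro y hy
    simp only [mem_filter, mem_univ, true_and] at hy
    obtain ⟨h1, h2⟩ := hy
    have hlt := y.val_lt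
    rw [Finset.mem_Ico]
    refine ⟨h1, ?_⟩
    by_contra hc
    -- the translate wraps around once, and its residue is less than `t`
    have hv : (y + (t : ZMod p)).val = y.val + t - p := by
      rw [ZMod.val_add, ZMod.val_natCast_of_lt (by omega), Nat.mod_eq_sub_mod (by omega),
        Nat.mod_eq_of_lt (by omega)]
    omega
  have := Finset.card_le_card_of_injOn (fun y : ZMod p => y.val) h
    (fun x _ y _ hxy => ZMod.val_injective p hxy)
  rw [Nat.card_Ico] at this
  omega

lemma shift_bound (p : ℕ) [Fact p.Prime] (n k s e j : ℕ) (u : ZMod p) (hk : k ≤ p)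
    (he : (e : ZMod p) ≠ 0)
    (hs : ((range k).filter (fun i : ℕ => (u + (i : ZMod p) * e).val < n)).card ≤ s)
    (hj : j * e ≤ n) : k ≤ j + 2 * s + (p - n - j * e) := by
  set B := (range k).filter (fun i : ℕ => (u + (i : ZMod p) * e).val < n) with hB
  set G := (range (k - j)).filter (fun i : ℕ => i ∉ B ∧ i + j ∉ B) with hG
  have h1 : G.card ≤ p - n - j * e := by
    refine le_trans ?_ (card_inter_shift p n (j * e) hj)
    refine Finset.card_le_card_of_injOn (fun i : ℕ => u + (i : ZMod p) * e) ?_ ?_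
    · intro i hi
      simp only [hG, hB, coe_filter, Set.mem_ofPred_eq, mem_filter, mem_range, not_and, not_lt] at hi
      simp only [coe_filter, mem_univ, true_and, Set.mem_ofPred_eq]
      refine ⟨hi.2.1 (by omega), ?_⟩
      have := hi.2.2 (by omega)
      push_cast at this ⊢
      rwa [add_mul, ← add_assoc] at this
    · intro x hx y hy hxy
      simp only [hG, coe_filter, Set.mem_ofPred_eq, mem_range] at hx hy
      have h := mul_right_cancel₀ he (add_left_cancel hxy)
      have h' := (ZMod.natCast_eq_natCast_iff' x y p).1 h
      rwa [Nat.mod_eq_of_lt (by omega), Nat.mod_eq_of_lt (by omega)] at h'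
  have h2 : range (k - j) ⊆ G ∪ (B ∪ ((range (k - j)).filter (fun i : ℕ => i + j ∈ B))) := by
    intro i hi
    simp only [hG, mem_union, mem_filter]
    tauto
  have h3 : ((range (k - j)).filter (fun i : ℕ => i + j ∈ B)).card ≤ B.card :=
    Finset.card_le_card_of_injOn (fun i => i + j) (fun i hi => by simpa using (mem_filter.1 hi).2)
      (fun x _ y _ hxy => by simpa using hxy)
  have h4 := (Finset.card_le_card h2).trans
    ((Finset.card_union_le _ _).trans (Nat.add_le_add_left (Finset.card_union_le _ _) _))
  rw [card_range] at h4
  omega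

/-- The contradiction for a progression whose difference satisfies `2 ≤ e ≤ p / 2`. -/
lemma core (p : ℕ) [Fact p.Prime] (α : ℝ) (hα1 : α ≤ 1 / 5)
    (N n k s e : ℕ) (hN : 1 ≤ N) (hn : n = 2 * N - 1) (u : ZMod p) (hk : k ≤ p)
    (he2 : 2 ≤ e) (hep : 2 * e ≤ p)
    (hs : ((range k).filter (fun i : ℕ => (u + (i : ZMod p) * e).val < n)).card ≤ s)
    (hkα : (k : ℝ) > (1 + α) * N - 3) (hsα : (s : ℝ) ≤ α * N - 2)
    (hcon : (p : ℝ) + 3 ≤ (3 + α) * N) : False := by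
  have he0 : (e : ZMod p) ≠ 0 := by
    rw [Ne, ZMod.natCast_eq_zero_iff]
    intro h
    have := Nat.le_of_dvd (by omega) h
    omega
  have hN1 : (1 : ℝ) ≤ N := by exact_mod_cast hN
  have hαN : α * N ≤ N / 5 := by nlinarith
  have hp4 : p + 2 ≤ 4 * N := by
    have : (p : ℝ) + 2 ≤ 4 * N := by linarith
    exact_mod_cast this
  have hmk : p + 1 ≤ k + 2 * N := by
    have : (p : ℝ) < k + 2 * N := by linarith
    have : p < k + 2 * N := by exact_mod_cast this
    omega
  have hk4 : 4 * s + 1 < k := by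
    have : (4 : ℝ) * s + 1 < k := by linarith
    exact_mod_cast this
  have hps : p + 2 * s + 4 ≤ 4 * N := by
    have : (p : ℝ) + 2 * s + 4 ≤ 4 * N := by linarith
    exact_mod_cast this
  have b1 := shift_bound p n k s e 1 u hk he0 hs (by omega)
  have hes : e ≤ 2 * s + 1 := by omega
  -- `j = ⌈m / e⌉` with `m = p - n`
  obtain ⟨j, hj1, hj2⟩ : ∃ j, p - n ≤ j * e ∧ j * e < p - n + e := by
    refine ⟨(p - n + e - 1) / e, ?_, ?_⟩
    · have := Nat.lt_div_mul_add (a := p - n + e - 1) (b := e) (by omega)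
      omega
    · have := Nat.div_mul_le_self (p - n + e - 1) e
      omega
  have b2 := shift_bound p n k s e j u hk he0 hs (by omega)
  have hj3 : 2 * j ≤ p - n + 1 := by
    rcases j with _ | j
    · omega
    · have : j * 2 ≤ j * e := Nat.mul_le_mul_left _ he2
      rw [add_mul] at hj2
      omega
  omega

lemma isAPWith_range {p : ℕ} [Fact p.Prime] {g : ZMod p} (hg : g ≠ 0) {P : Finset (ZMod p)}
    (hP : IsAPWith g P) : ∃ a : ZMod p,
      P = (Finset.range P.card).image (fun i : ℕ => a + (i : ZMod p) * g) := by
  obtain ⟨a, k, -, rfl⟩ := hP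
  refine ⟨a, ?_⟩
  have hinj : ∀ l ≤ p, ((Finset.range l).image (fun i : ℕ => a + (i : ZMod p) * g)).card = l := by
    intro l hl
    rw [Finset.card_image_of_injOn, card_range]
    intro x hx y hy hxy
    simp only [coe_range, Set.mem_Iio] at hx hy
    have h := mul_right_cancel₀ hg (add_left_cancel hxy)
    have h' := (ZMod.natCast_eq_natCast_iff' x y p).1 h
    rwa [Nat.mod_eq_of_lt (by omega), Nat.mod_eq_of_lt (by omega)] at h'
  rcases le_total k p with hk | hk
  · rw [hinj k hk]
  · -- the progression covers all of `ZMod p`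
    have hu : (Finset.range p).image (fun i : ℕ => a + (i : ZMod p) * g) = univ := by
      rw [← Finset.card_eq_iff_eq_univ, hinj p le_rfl, ZMod.card]
    have hu' : (Finset.range k).image (fun i : ℕ => a + (i : ZMod p) * g) = univ := by
      rw [← Finset.univ_subset_iff, ← hu]
      exact Finset.image_subset_image (Finset.range_subset_range.2 hk)
    rw [hu', Finset.card_univ, ZMod.card, hu]

theorem stmt11 (p : ℕ) (hp : p.Prime) (hp80 : 80 ≤ p)
    (α : ℝ) (hα0 : 0 < α) (hα1 : α ≤ 1 / 5)
    (d : ℕ) (hd2 : 2 ≤ d) (hdp : d ≤ p - 2)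
    (N : ℕ) (hN : 1 ≤ N)
    (g : ZMod p) (hg : g ≠ 0)
    (I J : Finset (ZMod p)) (hI : IsAPWith g I) (hJ : IsAPWith g J)
    (hIcard : I.card = 2 * N - 1)
    (hJcard : ((J.card : ℝ)) > (1 + α) * N - 3)
    (hInter : (((I ∩ J.image (fun x => d • x)).card : ℝ)) ≤ α * N - 2) :
    (N : ℝ) < ((p : ℝ) + 3) / (3 + α) := by
  have : Fact p.Prime := ⟨hp⟩
  by_contra hcon
  rw [not_lt, div_le_iff₀ (by linarith), mul_comm] at hcon
  have hk : J.card ≤ p := by simpa [ZMod.card] using J.card_le_univ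
  obtain ⟨a, ha⟩ := isAPWith_range hg hI
  obtain ⟨b, hb⟩ := isAPWith_range hg hJ
  have hd0 : (d : ZMod p) ≠ 0 := by
    rw [Ne, ZMod.natCast_eq_zero_iff]
    intro h
    have := Nat.le_of_dvd (by omega) h
    omega
  -- `u` is the start of `d·J` in the coordinate `x ↦ (x - a) / g`
  set u : ZMod p := (d * b - a) / g with hu
  have hug : u * g = d * b - a := by rw [hu, div_mul_cancel₀ _ hg]
  have hs : ((range J.card).filter (fun i : ℕ => (u + (i : ZMod p) * d).val < I.card)).card
      ≤ (I ∩ J.image (fun x => d • x)).card := by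
    refine Finset.card_le_card_of_injOn (fun i : ℕ => d • (b + (i : ZMod p) * g)) ?_ ?_
    · intro i hi
      simp only [coe_filter, Set.mem_ofPred_eq, mem_range] at hi
      rw [mem_coe, mem_inter]
      constructor
      · rw [ha, mem_image]
        refine ⟨(u + (i : ZMod p) * d).val, mem_range.2 hi.2, ?_⟩
        simp only [ZMod.natCast_zmod_val, nsmul_eq_mul]
        linear_combination hug
      · refine mem_image_of_mem _ ?_
        rw [hb]
        exact mem_image_of_mem (fun i : ℕ => b + (i : ZMod p) * g) (mem_range.2 hi.1)
    · intro x hx y hy hxy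
      simp only [coe_filter, Set.mem_ofPred_eq, mem_range] at hx hy
      simp only [nsmul_eq_mul] at hxy
      have h := mul_right_cancel₀ hg (add_left_cancel (mul_left_cancel₀ hd0 hxy))
      have h' := (ZMod.natCast_eq_natCast_iff' x y p).1 h
      rwa [Nat.mod_eq_of_lt (by omega), Nat.mod_eq_of_lt (by omega)] at h'
  rcases le_total (2 * d) p with h2 | h2
  · exact core p α hα1 N I.card J.card _ d hN hIcard u hk hd2 h2 hs hJcard hInter hcon
  · -- reverse the progression
    refine core p α hα1 N I.card J.card _ (p - d) hN hIcard
      (u + ((J.card - 1 : ℕ) : ZMod p) * d) hk (by omega) (by omega) (le_trans ?_ hs)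
      hJcard hInter hcon
    refine Finset.card_le_card_of_injOn (fun i : ℕ => J.card - 1 - i) ?_ ?_
    · intro i hi
      simp only [coe_filter, Set.mem_ofPred_eq, mem_range] at hi ⊢
      refine ⟨by omega, ?_⟩
      convert hi.2 using 2
      rw [Nat.cast_sub (by omega : i ≤ J.card - 1), Nat.cast_sub (by omega : d ≤ p),
        ZMod.natCast_self]
      ring
    · intro x hx y hy hxy
      simp only [coe_filter, Set.mem_ofPred_eq, mem_range] at hx hy hxy
      omega
end
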